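/- arXiv:0708.1547 — 2 statements merged into one kernel-verified Lean document; each statement's English description precedes it below -/
import Mathlib

section
/- Let n ≥ 3. Let K(x) = ∫_{S^{n−1}} e^{2πi x·ω} dσ(ω) be the Fourier transform of the surface measure of the unit sphere (a smooth function on ℝⁿ), and set K̃(x) = x · ∇K(x). Then there is a constant C depending only on n such that for every Schwartz function f on ℝⁿ, ‖f ∗ K̃‖_{L^{(2n+2)/(n−3)}(ℝⁿ)} ≤ C ‖f‖_{L^{(2n+2)/(n+5)}(ℝⁿ)} (for n = 3 the target exponent is ∞, i.e. the bound is in L^∞). -/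
open MeasureTheory Complex Metric
open scoped ENNReal Real RealInnerProductSpace

noncomputable section

/-
Stein's complex interpolation, applied to the kernels `K̃(x) (1 + |x|²)^{κ - z(κ + 1)}` with
`κ = (n - 3) / 4` and `0 ≤ Re z ≤ 1`. On `Re z = 0` they are bounded, since
`|K̃(x)| ≲ ⟨x⟩^{-(n-3)/2}`; this decay follows from the radial Helmholtz equation
`t K'' + (n - 1) K' + 4π² t K = 0` through a damped energy. On `Re z = 1` they are
`K̃(x) (1 + |x|²)^{-w}` with `Re w = 1`, whose Fourier transforms are bounded: the subordination
`Γ(w) r^{-w} = ∫ t^{w-1} e^{-rt} dt` turns them into integrals over time and over the sphere of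
derivatives of heat kernels centred on the sphere. These are controlled by
`∫_S |(ω - ξ)·ω| |ω - ξ|^{-n} dσ(ω)`, which is bounded in `ξ` because `(ω - ξ)·ω` measures the
distance to the tangent plane at `ω`, not to `ω` itself, exactly as for double-layer potentials.
The point `θ = (n - 3) / (n + 1)`, where the exponent `κ - z(κ + 1)` vanishes, gives the bilinear
bound for `K̃` itself, and duality gives the theorem.
-/

section SphereExtension

variable {E : Type*} [NormedAddCommGroup E] [InnerProductSpace ℝ E]

/-- The Fourier phase `2πi ⟪x, ω⟫`, as a continuous bilinear form. -/
def phase : E →L[ℝ] E →L[ℝ] ℂ :=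
  ContinuousLinearMap.compL ℝ E ℝ ℂ ((2 * π * I : ℂ) • ofRealCLM) ∘L innerSL ℝ

theorem phase_apply (x ω : E) : phase x ω = 2 * π * I * (⟪x, ω⟫ : ℝ) := rfl

theorem norm_cexp_phase (x ω : E) : ‖cexp (phase x ω)‖ = 1 := by
  simp [phase_apply, norm_exp]

theorem phase_map (U : E ≃ₗᵢ[ℝ] E) (x ω : E) : phase (U x) (U ω) = phase x ω := by
  simp only [phase_apply, U.inner_map_map]

theorem hasFDerivAt_cexp_phase (x ω : E) :
    HasFDerivAt (fun x => cexp (phase x ω)) (cexp (phase x ω) • phase.flip ω) x := by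
  simpa using ((phase (E := E)).flip ω).hasFDerivAt.cexp

theorem exists_isometry_map_eq {x y : E} (h : ‖x‖ = ‖y‖) : ∃ U : E ≃ₗᵢ[ℝ] E, U x = y :=
  ⟨(ℝ ∙ (x - y))ᗮ.reflection, Submodule.reflection_sub h⟩

theorem sum_phase_mul_phase {ι : Type*} [Fintype ι] (b : OrthonormalBasis ι ℝ E) (ω : E) :
    ∑ i, phase (b i) ω * phase (b i) ω = -(2 * π) ^ 2 * ‖ω‖ ^ 2 := by
  have hparseval : ((∑ i, ⟪b i, ω⟫ ^ 2 : ℝ) : ℂ) = ‖ω‖ ^ 2 := by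
    rw [← ofReal_pow, ← b.sum_sq_norm_inner_right ω]
    simp only [Real.norm_eq_abs, sq_abs]
  rw [← hparseval]
  push_cast
  rw [Finset.mul_sum]
  refine Finset.sum_congr rfl fun i _ => ?_
  rw [phase_apply]
  linear_combination (2 * π * (⟪b i, ω⟫ : ℂ)) ^ 2 * I_sq

variable [FiniteDimensional ℝ E] [MeasurableSpace E] [BorelSpace E]

/-- The Fourier extension operator of the unit sphere, `φ ↦ (φ σ)^` up to the sign of the phase.
The density `φ` is a function on the ambient space, of which only the restriction to the sphere
matters. -/
def sphereExtension (φ : E → ℂ) (x : E) : ℂ :=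
  ∫ ω : sphere (0 : E) 1, φ ω * cexp (phase x (ω : E)) ∂(volume : Measure E).toSphere

theorem sphereExtension_one_eq : sphereExtension (1 : E → ℂ) = fun x =>
    ∫ ω : sphere (0 : E) 1, cexp (2 * π * I * (⟪x, (ω : E)⟫ : ℝ))
      ∂(volume : Measure E).toSphere := by
  ext x
  simp only [sphereExtension, Pi.one_apply, one_mul, phase_apply]

/-- The kernel `K̃(x) = x · ∇K(x)`, where `K` is the Fourier transform of the surface measure,
written as an integral over the sphere. -/
def eulerKernel (x : E) : ℂ := sphereExtension (phase x) x

theorem integrable_toSphere_of_continuous {F : Type*} [NormedAddCommGroup F]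
    {φ : sphere (0 : E) 1 → F} (hφ : Continuous φ) :
    Integrable φ (volume : Measure E).toSphere :=
  hφ.integrable_of_hasCompactSupport (HasCompactSupport.of_compactSpace φ)

theorem sphereExtension_const_mul (c : ℂ) (φ : E → ℂ) (x : E) :
    sphereExtension (fun ω => c * φ ω) x = c * sphereExtension φ x := by
  simp only [sphereExtension, mul_assoc, integral_const_mul]

theorem sphereExtension_sum {ι : Type*} (s : Finset ι) {φ : ι → E → ℂ}
    (hφ : ∀ i ∈ s, Continuous (φ i)) (x : E) :
    sphereExtension (fun ω => ∑ i ∈ s, φ i ω) x = ∑ i ∈ s, sphereExtension (φ i) x := by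
  simp only [sphereExtension, Finset.sum_mul]
  refine integral_finsetSum s fun i hi => integrable_toSphere_of_continuous ?_
  have := hφ i hi
  fun_prop

theorem hasFDerivAt_sphereExtension {φ : E → ℂ} (hφ : Continuous φ) (x : E) :
    HasFDerivAt (sphereExtension φ)
      (∫ ω : sphere (0 : E) 1, φ ω • cexp (phase x (ω : E)) • phase.flip (ω : E)
        ∂(volume : Measure E).toSphere) x := by
  refine hasFDerivAt_integral_of_dominated_of_fderiv_le (s := Set.univ)
    (F := fun x (ω : sphere (0 : E) 1) => φ ω * cexp (phase x (ω : E)))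
    (F' := fun x ω => φ ω • cexp (phase x (ω : E)) • phase.flip (ω : E))
    (bound := fun ω => ‖φ ω‖ * ‖phase.flip (ω : E)‖) Filter.univ_mem
    (.of_forall fun y => Continuous.aestronglyMeasurable (by fun_prop))
    (integrable_toSphere_of_continuous (by fun_prop))
    (Continuous.aestronglyMeasurable (by fun_prop)) (.of_forall fun ω y _ => ?_)
    (integrable_toSphere_of_continuous (by fun_prop))
    (.of_forall fun ω y _ => (hasFDerivAt_cexp_phase y (ω : E)).const_mul (φ ω))
  simp only [norm_smul, norm_cexp_phase, one_mul, le_refl]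

theorem differentiable_sphereExtension {φ : E → ℂ} (hφ : Continuous φ) :
    Differentiable ℝ (sphereExtension φ) :=
  fun x => (hasFDerivAt_sphereExtension hφ x).differentiableAt

theorem fderiv_sphereExtension_apply {φ : E → ℂ} (hφ : Continuous φ) (x v : E) :
    fderiv ℝ (sphereExtension φ) x v = sphereExtension (fun ω => φ ω * phase v ω) x := by
  rw [(hasFDerivAt_sphereExtension hφ x).fderiv, ContinuousLinearMap.integral_apply
    (integrable_toSphere_of_continuous (by fun_prop)), sphereExtension]
  congr 1 with ω
  simp only [smul_apply, ContinuousLinearMap.flip_apply, smul_eq_mul]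
  ring

theorem hasDerivAt_sphereExtension_line {φ : E → ℂ} (hφ : Continuous φ) (x v : E) (s : ℝ) :
    HasDerivAt (fun s : ℝ => sphereExtension φ (x + s • v))
      (sphereExtension (fun ω => φ ω * phase v ω) (x + s • v)) s := by
  rw [← fderiv_sphereExtension_apply hφ]
  refine (differentiable_sphereExtension hφ _).hasFDerivAt.comp_hasDerivAt s ?_
  simpa only [one_smul, id_eq] using ((hasDerivAt_id s).smul_const v).const_add x

theorem fderiv_sphereExtension_one_apply (x v : E) :
    fderiv ℝ (sphereExtension 1) x v = sphereExtension (phase v) x := by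
  simp only [fderiv_sphereExtension_apply continuous_one, Pi.one_apply, one_mul]

theorem continuous_eulerKernel : Continuous (eulerKernel : E → ℂ) := by
  have hcont := continuous_parametric_integral_of_continuous
    (μ := (volume : Measure E).toSphere) (s := Set.univ)
    (f := fun x (ω : sphere (0 : E) 1) => phase x (ω : E) * cexp (phase x (ω : E)))
    (by fun_prop) isCompact_univ
  simpa only [Measure.restrict_univ] using! hcont

/-- The homeomorphism of the unit sphere induced by a linear isometry. -/
def sphereHomeomorph (U : E ≃ₗᵢ[ℝ] E) : sphere (0 : E) 1 ≃ₜ sphere (0 : E) 1 :=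
  U.toHomeomorph.subtype fun x => by simp

open scoped Pointwise in
theorem measurePreserving_sphereHomeomorph (U : E ≃ₗᵢ[ℝ] E) :
    MeasurePreserving (sphereHomeomorph U) (volume : Measure E).toSphere
      (volume : Measure E).toSphere := by
  have hU := U.measurePreserving.measure_preimage_emb U.toHomeomorph.measurableEmbedding
  refine ⟨(sphereHomeomorph U).measurable, Measure.ext fun s hs => ?_⟩
  have hcoe : U '' ((↑) '' (sphereHomeomorph U ⁻¹' s)) = ((↑) '' s : Set E) := by
    conv_rhs => rw [← Set.image_preimage_eq s (sphereHomeomorph U).surjective]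
    simp only [Set.image_image]
    rfl
  have hcone : U '' (Set.Ioo (0 : ℝ) 1 • ((↑) '' (sphereHomeomorph U ⁻¹' s) : Set E)) =
      Set.Ioo (0 : ℝ) 1 • ((↑) '' s : Set E) := by
    rw [← hcoe]
    exact Set.image_image2_distrib_right fun r x => U.map_smul r x
  rw [Measure.map_apply (sphereHomeomorph U).measurable hs, Measure.toSphere_apply' _ hs,
    Measure.toSphere_apply' _ ((sphereHomeomorph U).measurable hs), ← hcone,
    ← hU (U '' _), Set.preimage_image_eq _ U.injective]

theorem sphereExtension_comp_isometry (U : E ≃ₗᵢ[ℝ] E) (φ : E → ℂ) (x : E) :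
    sphereExtension (fun ω => φ (U ω)) x = sphereExtension φ (U x) := by
  rw [sphereExtension, sphereExtension, ← (measurePreserving_sphereHomeomorph U).integral_comp
    (sphereHomeomorph U).measurableEmbedding (fun ω => φ ω * cexp (phase (U x) (ω : E)))]
  congr 1 with ω
  rw [← phase_map U x]
  rfl

theorem eulerKernel_eq_of_norm_eq {x y : E} (h : ‖x‖ = ‖y‖) : eulerKernel x = eulerKernel y := by
  obtain ⟨U, rfl⟩ := exists_isometry_map_eq h
  simp only [eulerKernel, ← sphereExtension_comp_isometry, phase_map]

theorem sphereExtension_phase_eq_zero {x w : E} (h : ⟪x, w⟫ = 0) :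
    sphereExtension (phase w) x = 0 := by
  have hx : (ℝ ∙ w)ᗮ.reflection x = x := Submodule.reflection_mem_subspace_eq_self <|
    Submodule.mem_orthogonal_singleton_iff_inner_left.2 h
  have hw : (ℝ ∙ w)ᗮ.reflection w = -w :=
    Submodule.reflection_orthogonalComplement_singleton_eq_neg w
  have hodd : sphereExtension (phase w) x = -sphereExtension (phase w) x := by
    conv_lhs => rw [← hx, ← sphereExtension_comp_isometry]
    have hreflect (ω : E) : phase w ((ℝ ∙ w)ᗮ.reflection ω) = -phase w ω := by
      rw [← phase_map (ℝ ∙ w)ᗮ.reflection w ω, hw, map_neg, neg_apply, neg_neg]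
    simp only [hreflect, sphereExtension, neg_mul, integral_neg]
  exact self_eq_neg.1 hodd

theorem sphereExtension_phase_sq_of_inner_eq_zero {x v : E} (h : ⟪x, v⟫ = 0) :
    ‖x‖ ^ 2 * sphereExtension (fun ω => phase v ω * phase v ω) x = ‖v‖ ^ 2 * eulerKernel x := by
  -- `‖x‖² v - s ‖v‖² x` is orthogonal to `x + s v`; differentiate the resulting identity in `s`.
  have horth (s : ℝ) : (‖x‖ ^ 2 : ℂ) * sphereExtension (phase v) (x + s • v)
      - s * (‖v‖ ^ 2 * sphereExtension (phase x) (x + s • v)) = 0 := by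
    have hw : ⟪x + s • v, ‖x‖ ^ 2 • v - (s * ‖v‖ ^ 2) • x⟫ = 0 := by
      simp only [inner_add_left, inner_sub_right, real_inner_smul_left, real_inner_smul_right, h,
        real_inner_comm x v, real_inner_self_eq_norm_sq]
      ring
    have hzero := sphereExtension_phase_eq_zero hw
    rw [← fderiv_sphereExtension_one_apply, map_sub, map_smul, map_smul,
      fderiv_sphereExtension_one_apply, fderiv_sphereExtension_one_apply] at hzero
    rw [← hzero]
    simp only [real_smul]
    push_cast
    ring
  have hv := (hasDerivAt_sphereExtension_line (phase v).continuous x v 0).const_mul (‖x‖ ^ 2 : ℂ)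
  have hx := (hasDerivAt_sphereExtension_line (phase x).continuous x v 0).const_mul (‖v‖ ^ 2 : ℂ)
  have hdiff := hv.sub ((hasDerivAt_id (0 : ℝ)).ofReal_comp.mul hx)
  have hzero := hdiff.unique ((hasDerivAt_const (0 : ℝ) (0 : ℂ)).congr_of_eventuallyEq
    (.of_forall horth))
  simpa [sub_eq_zero, eulerKernel] using hzero

theorem sum_sphereExtension_phase_sq {ι : Type*} [Fintype ι] (b : OrthonormalBasis ι ℝ E) (x : E) :
    ∑ i, sphereExtension (fun ω => phase (b i) ω * phase (b i) ω) x =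
      -(2 * π) ^ 2 * sphereExtension 1 x := by
  rw [← sphereExtension_sum _ (fun i _ => by fun_prop), ← sphereExtension_const_mul]
  simp only [sum_phase_mul_phase, sphereExtension, norm_eq_of_mem_sphere, Pi.one_apply, ofReal_one,
    one_pow]

theorem eulerKernel_smul (t : ℝ) (x : E) :
    eulerKernel (t • x) = t * sphereExtension (phase x) (t • x) := by
  rw [eulerKernel, ← sphereExtension_const_mul]
  simp only [map_smul, ← real_smul]
  rfl

theorem radial_ode_sphereExtension {ι : Type*} [Fintype ι] (b : OrthonormalBasis ι ℝ E) (i : ι)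
    {t : ℝ} (ht : t ≠ 0) :
    t * (sphereExtension (fun ω => phase (b i) ω * phase (b i) ω) (t • b i)
        + (2 * π) ^ 2 * sphereExtension 1 (t • b i)) =
      -(Fintype.card ι - 1) * sphereExtension (phase (b i)) (t • b i) := by
  classical
  have htrans (j : ι) (hj : j ≠ i) : t ^ 2 * sphereExtension
      (fun ω => phase (b j) ω * phase (b j) ω) (t • b i) = eulerKernel (t • b i) := by
    have hij : ⟪t • b i, b j⟫ = 0 := by
      rw [real_inner_smul_left, b.inner_eq_zero hj.symm, mul_zero]
    simpa [norm_smul, ← ofReal_pow] using sphereExtension_phase_sq_of_inner_eq_zero hij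
  have hsum := congrArg ((t : ℂ) ^ 2 * ·) (sum_sphereExtension_phase_sq b (t • b i))
  simp only [Finset.mul_sum] at hsum
  rw [← Finset.add_sum_erase _ _ (Finset.mem_univ i),
    Finset.sum_congr rfl fun j hj => htrans j (Finset.ne_of_mem_erase hj), Finset.sum_const,
    Finset.card_erase_of_mem (Finset.mem_univ i), Finset.card_univ, nsmul_eq_mul,
    Nat.cast_pred (Fintype.card_pos_iff.2 ⟨i⟩), eulerKernel_smul] at hsum
  refine mul_left_cancel₀ (ofReal_ne_zero.2 ht) ?_
  linear_combination hsum

end SphereExtension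

section RadialDecay

variable {F : Type*} [NormedAddCommGroup F] [InnerProductSpace ℝ F] {c m r : ℝ} {u u' : ℝ → F}

/-- The modified energy of a solution of `u'' + (m / r) u' + c² u = 0`. The last summand is chosen
so that the terms of order `r ^ (m - 1)` cancel in its derivative. -/
def radialEnergy (c m : ℝ) (u u' : ℝ → F) (r : ℝ) : ℝ :=
  r ^ m * (‖u' r‖ ^ 2 + c ^ 2 * ‖u r‖ ^ 2 + m / r * ⟪u r, u' r⟫)

theorem hasDerivAt_radialEnergy (hr : 0 < r) (hu : HasDerivAt u (u' r) r)
    (hu' : HasDerivAt u' (-(m / r) • u' r - c ^ 2 • u r) r) :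
    HasDerivAt (radialEnergy c m u u') (-(m / r ^ 2) * (r ^ m * ⟪u r, u' r⟫)) r := by
  have hquot : HasDerivAt (fun r : ℝ => m / r) (-(m / r ^ 2)) r := by
    simpa [div_eq_mul_inv, neg_mul] using (hasDerivAt_inv hr.ne').const_mul m
  have hderiv := (Real.hasDerivAt_rpow_const (p := m) (.inl hr.ne')).mul
    ((hu'.norm_sq.add (hu.norm_sq.const_mul (c ^ 2))).add (hquot.mul (hu.inner ℝ hu')))
  refine hderiv.congr_deriv ?_
  simp only [Real.rpow_sub_one hr.ne', inner_sub_right, real_inner_smul_right,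
    real_inner_self_eq_norm_sq, real_inner_comm (u r) (u' r), Pi.add_apply, Pi.mul_apply]
  field_simp
  ring

theorem two_mul_mul_abs_inner_le (hc : 0 ≤ c) (a b : F) :
    2 * c * |⟪a, b⟫| ≤ ‖b‖ ^ 2 + c ^ 2 * ‖a‖ ^ 2 := by
  have hcs := mul_le_mul_of_nonneg_left (abs_real_inner_le_norm a b) hc
  nlinarith [sq_nonneg (c * ‖a‖ - ‖b‖)]

theorem le_two_mul_radialEnergy (hc : 0 < c) (hm : 0 < m) (hr : m / c ≤ r) :
    r ^ m * (‖u' r‖ ^ 2 + c ^ 2 * ‖u r‖ ^ 2) ≤ 2 * radialEnergy c m u u' r := by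
  have hr0 : 0 < r := (div_pos hm hc).trans_le hr
  have hmr : m / r ≤ c := (div_le_comm₀ hc hr0).1 hr
  have hcross : |m / r * ⟪u r, u' r⟫| ≤ (‖u' r‖ ^ 2 + c ^ 2 * ‖u r‖ ^ 2) / 2 := by
    rw [abs_mul, abs_of_pos (div_pos hm hr0)]
    linarith [two_mul_mul_abs_inner_le hc.le (u r) (u' r),
      mul_le_mul_of_nonneg_right hmr (abs_nonneg ⟪u r, u' r⟫)]
  rw [radialEnergy, mul_left_comm]
  gcongr
  linarith [neg_abs_le (m / r * ⟪u r, u' r⟫)]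

theorem antitoneOn_exp_mul_radialEnergy (hc : 0 < c) (hm : 0 < m)
    (hu : ∀ r > 0, HasDerivAt u (u' r) r)
    (hu' : ∀ r > 0, HasDerivAt u' (-(m / r) • u' r - c ^ 2 • u r) r) :
    AntitoneOn (fun r => Real.exp (m / (c * r)) * radialEnergy c m u u' r) (Set.Ici (m / c)) := by
  have hpos {r : ℝ} (hr : m / c ≤ r) : 0 < r := (div_pos hm hc).trans_le hr
  have hderiv (r : ℝ) (hr : 0 < r) := by
    have hexp : HasDerivAt (fun r : ℝ => m / (c * r)) (-(m / (c * r ^ 2))) r := by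
      refine ((hasDerivAt_inv hr.ne').const_mul (m / c)).congr_deriv ?_ |>.congr_of_eventuallyEq ?_
      · field_simp
      · exact .of_forall fun s => by simp only [div_eq_mul_inv, mul_inv, mul_assoc]
    exact hexp.exp.mul (hasDerivAt_radialEnergy hr (hu r hr) (hu' r hr))
  refine antitoneOn_of_deriv_nonpos (convex_Ici _)
    (fun r hr => (hderiv r (hpos hr)).continuousAt.continuousWithinAt)
    (fun r hr => (hderiv r (hpos (interior_subset hr))).differentiableAt.differentiableWithinAt)
    fun r hr => ?_
  have hr' : m / c ≤ r := interior_subset hr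
  have hr0 := hpos hr'
  have hcross : -(c * (r ^ m * ⟪u r, u' r⟫)) ≤ radialEnergy c m u u' r := by
    have hpow : (0 : ℝ) ≤ r ^ m := by positivity
    have habs := mul_le_mul_of_nonneg_left (two_mul_mul_abs_inner_le hc.le (u r) (u' r)) hpow
    have hneg := mul_le_mul_of_nonneg_left (neg_le_abs ⟪u r, u' r⟫) (mul_nonneg hpow hc.le)
    linarith [le_two_mul_radialEnergy (u := u) (u' := u') hc hm hr']
  refine (hderiv r hr0).deriv.trans_le ?_
  calc _ = -(Real.exp (m / (c * r)) * (m / (c * r ^ 2))) *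
        (radialEnergy c m u u' r - -(c * (r ^ m * ⟪u r, u' r⟫))) := by field_simp; ring
    _ ≤ 0 := mul_nonpos_of_nonpos_of_nonneg (neg_nonpos.2 (by positivity)) (sub_nonneg.2 hcross)

theorem exists_radial_decay (hc : 0 < c) (hm : 0 < m) (hu : ∀ r > 0, HasDerivAt u (u' r) r)
    (hu' : ∀ r > 0, HasDerivAt u' (-(m / r) • u' r - c ^ 2 • u r) r) :
    ∃ C, ∀ r, m / c ≤ r → r ^ m * ‖u' r‖ ^ 2 ≤ C := by
  refine ⟨2 * (Real.exp (m / (c * (m / c))) * radialEnergy c m u u' (m / c)), fun r hr => ?_⟩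
  have hr0 : 0 < r := (div_pos hm hc).trans_le hr
  have hanti := antitoneOn_exp_mul_radialEnergy hc hm hu hu' Set.self_mem_Ici hr hr
  have henergy := le_two_mul_radialEnergy (u := u) (u' := u') hc hm hr
  have hnonneg : 0 ≤ radialEnergy c m u u' r := by
    have : 0 ≤ r ^ m * (‖u' r‖ ^ 2 + c ^ 2 * ‖u r‖ ^ 2) := by positivity
    linarith
  calc r ^ m * ‖u' r‖ ^ 2 ≤ r ^ m * (‖u' r‖ ^ 2 + c ^ 2 * ‖u r‖ ^ 2) := by
        gcongr
        exact le_add_of_nonneg_right (by positivity)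
    _ ≤ 2 * radialEnergy c m u u' r := henergy
    _ ≤ 2 * (Real.exp (m / (c * r)) * radialEnergy c m u u' r) := by
        gcongr
        exact le_mul_of_one_le_left hnonneg (Real.one_le_exp (by positivity))
    _ ≤ _ := by gcongr

theorem rpow_one_add_sq_le {t : ℝ} (ht : 1 ≤ t) (κ : ℝ) :
    (1 + t ^ 2) ^ κ ≤ 2 ^ |κ| * t ^ (2 * κ) := by
  have hratio : 1 ≤ (1 + t ^ 2) / t ^ 2 ∧ (1 + t ^ 2) / t ^ 2 ≤ 2 := by
    rw [le_div_iff₀ (by positivity), div_le_iff₀ (by positivity)]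
    constructor <;> nlinarith
  have hpow : ((1 + t ^ 2) / t ^ 2) ^ κ ≤ 2 ^ |κ| :=
    (Real.rpow_le_rpow_of_exponent_le hratio.1 (le_abs_self κ)).trans
      (Real.rpow_le_rpow (by positivity) hratio.2 (abs_nonneg κ))
  rwa [Real.div_rpow (by positivity) (by positivity), div_le_iff₀ (by positivity),
    ← Real.rpow_natCast_mul (by positivity), Nat.cast_ofNat] at hpow

variable {E : Type*} [NormedAddCommGroup E] [InnerProductSpace ℝ E] [FiniteDimensional ℝ E]
  [MeasurableSpace E] [BorelSpace E]

theorem exists_rpow_mul_norm_sphereExtension_phase_le {ι : Type*} [Fintype ι]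
    (b : OrthonormalBasis ι ℝ E) (i : ι) (hι : 2 ≤ Fintype.card ι) :
    ∃ C, ∀ t, ((Fintype.card ι : ℝ) - 1) / (2 * π) ≤ t →
      t ^ ((Fintype.card ι : ℝ) - 1) * ‖sphereExtension (phase (b i)) (t • b i)‖ ^ 2 ≤ C := by
  have hι' : (2 : ℝ) ≤ Fintype.card ι := by exact_mod_cast hι
  refine exists_radial_decay (u := fun t => sphereExtension 1 (t • b i)) Real.two_pi_pos
    (by linarith) (fun t _ => ?_) fun t ht => ?_
  · simpa using hasDerivAt_sphereExtension_line continuous_one 0 (b i) t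
  · have hline : HasDerivAt (fun t : ℝ => sphereExtension (phase (b i)) (t • b i))
        (sphereExtension (fun ω => phase (b i) ω * phase (b i) ω) (t • b i)) t := by
      simpa using hasDerivAt_sphereExtension_line (phase (b i)).continuous 0 (b i) t
    refine hline.congr_deriv ?_
    have hode := radial_ode_sphereExtension b i ht.ne'
    have hdiv := mul_div_cancel₀ ((Fintype.card ι : ℂ) - 1) (ofReal_ne_zero.2 ht.ne')
    refine mul_left_cancel₀ (ofReal_ne_zero.2 ht.ne') ?_
    simp only [real_smul]
    push_cast
    linear_combination hode + sphereExtension (phase (b i)) (t • b i) * hdiv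

theorem norm_eulerKernel_eq {ι : Type*} [Fintype ι] (b : OrthonormalBasis ι ℝ E) (i : ι) (x : E) :
    ‖eulerKernel x‖ = ‖x‖ * ‖sphereExtension (phase (b i)) (‖x‖ • b i)‖ := by
  rw [eulerKernel_eq_of_norm_eq (x := x) (y := ‖x‖ • b i) (by simp [norm_smul]),
    eulerKernel_smul, norm_mul, norm_real, norm_norm]

theorem exists_norm_eulerKernel_mul_rpow_le (hn : 2 ≤ Module.finrank ℝ E) :
    ∃ C, ∀ x : E, ‖eulerKernel x‖ * (1 + ‖x‖ ^ 2) ^ (((Module.finrank ℝ E : ℝ) - 3) / 4) ≤ C := by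
  set n := Module.finrank ℝ E
  set κ : ℝ := ((n : ℝ) - 3) / 4 with hκ
  let b := stdOrthonormalBasis ℝ E
  let i : Fin n := ⟨0, by omega⟩
  obtain ⟨A, hA⟩ := exists_rpow_mul_norm_sphereExtension_phase_le b i (by simpa using hn)
  rw [Fintype.card_fin] at hA
  set R := max 1 (((n : ℝ) - 1) / (2 * π))
  have hfar (x : E) (hx : R ≤ ‖x‖) : ‖eulerKernel x‖ * (1 + ‖x‖ ^ 2) ^ κ ≤ 2 ^ |κ| * √A := by
    have hx1 : 1 ≤ ‖x‖ := (le_max_left _ _).trans hx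
    have hsq := hA ‖x‖ ((le_max_right _ _).trans hx)
    have hroot : ‖x‖ ^ (2 * κ) * ‖eulerKernel x‖ ≤ √A := by
      refine Real.le_sqrt_of_sq_le (le_of_eq_of_le ?_ hsq)
      rw [norm_eulerKernel_eq b i, mul_pow, mul_pow, ← mul_assoc, ← Real.rpow_natCast (_ ^ _),
        ← Real.rpow_mul (by positivity), ← Real.rpow_natCast ‖x‖ 2,
        ← Real.rpow_add (by positivity)]
      congr 2
      rw [hκ]
      push_cast
      ring
    calc ‖eulerKernel x‖ * (1 + ‖x‖ ^ 2) ^ κ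
        ≤ ‖eulerKernel x‖ * (2 ^ |κ| * ‖x‖ ^ (2 * κ)) := by
          gcongr
          exact rpow_one_add_sq_le hx1 κ
      _ = 2 ^ |κ| * (‖x‖ ^ (2 * κ) * ‖eulerKernel x‖) := by ring
      _ ≤ _ := by gcongr
  have hcont : Continuous fun x : E => ‖eulerKernel x‖ * (1 + ‖x‖ ^ 2) ^ κ :=
    continuous_eulerKernel.norm.mul <|
      Continuous.rpow_const (by fun_prop) fun x => .inl (by positivity)
  obtain ⟨B, hB⟩ := (isCompact_closedBall (0 : E) R).exists_bound_of_continuousOn hcont.continuousOn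
  refine ⟨max (2 ^ |κ| * √A) B, fun x => ?_⟩
  rcases le_total R ‖x‖ with hx | hx
  · exact (hfar x hx).trans (le_max_left _ _)
  · exact (Real.le_norm_self _).trans
      ((hB x (mem_closedBall_zero_iff.2 hx)).trans (le_max_right _ _))

end RadialDecay

section Potentials

theorem setLIntegral_Ioc_rpow {e b : ℝ} (he : -1 < e) (hb : 0 ≤ b) :
    ∫⁻ t in Set.Ioc 0 b, ENNReal.ofReal (t ^ e) = ENNReal.ofReal (b ^ (e + 1) / (e + 1)) := by
  have hint := (intervalIntegrable_iff_integrableOn_Ioc_of_le hb).1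
    (intervalIntegral.intervalIntegrable_rpow' he)
  rw [← ofReal_integral_eq_lintegral_ofReal hint, ← intervalIntegral.integral_of_le hb,
    integral_rpow (.inl he), Real.zero_rpow (by linarith), sub_zero]
  filter_upwards [ae_restrict_mem measurableSet_Ioc] with t ht
  exact Real.rpow_nonneg ht.1.le e

theorem setLIntegral_Ioi_rpow {e b : ℝ} (he : e < -1) (hb : 0 < b) :
    ∫⁻ t in Set.Ioi b, ENNReal.ofReal (t ^ e) = ENNReal.ofReal (-b ^ (e + 1) / (e + 1)) := by
  rw [← ofReal_integral_eq_lintegral_ofReal (integrableOn_Ioi_rpow_of_lt he hb),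
    integral_Ioi_rpow_of_lt he hb]
  filter_upwards [ae_restrict_mem measurableSet_Ioi] with t ht
  exact Real.rpow_nonneg (hb.trans ht).le e

variable {α : Type*} [MeasurableSpace α] {μ : Measure α} [IsFiniteMeasure μ] {D : α → ℝ}
  {A d s δ : ℝ}

theorem measure_lt_inv_mul_rpow_le (hball : ∀ r > 0, μ.real {a | D a < r} ≤ A * r ^ d)
    {t : ℝ} (ht : 0 < t) :
    μ {a | t < (D a)⁻¹} * ENNReal.ofReal (t ^ (s - 1)) ≤
      ENNReal.ofReal A * ENNReal.ofReal (t ^ (s - d - 1)) := by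
  have hsub : {a | t < (D a)⁻¹} ⊆ {a | D a < t⁻¹} := fun a ha =>
    (lt_inv_comm₀ ht (inv_pos.1 (ht.trans ha))).1 ha
  calc _ ≤ ENNReal.ofReal (A * t⁻¹ ^ d) * ENNReal.ofReal (t ^ (s - 1)) := by
        gcongr
        exact (measure_mono hsub).trans ((ofReal_measureReal (measure_ne_top _ _)).symm.trans_le
          (ENNReal.ofReal_le_ofReal (hball _ (inv_pos.2 ht))))
    _ = ENNReal.ofReal (A * t ^ (s - d - 1)) := by
        rw [← ENNReal.ofReal_mul' (by positivity), mul_assoc, Real.inv_rpow ht.le,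
          ← Real.rpow_neg ht.le, ← Real.rpow_add ht]
        congr 3
        ring
    _ = _ := ENNReal.ofReal_mul' (by positivity)

theorem lintegral_inv_rpow_le_of_le (hD : Measurable D) (hδ : 0 < δ) (hDδ : ∀ a, δ ≤ D a)
    (hball : ∀ r > 0, μ.real {a | D a < r} ≤ A * r ^ d) (hs : 0 < s) (hds : d < s) :
    ∫⁻ a, ENNReal.ofReal ((D a)⁻¹ ^ s) ∂μ ≤
      ENNReal.ofReal s * (ENNReal.ofReal A * ENNReal.ofReal (δ⁻¹ ^ (s - d) / (s - d))) := by
  have hnear : ∀ t ∈ Set.Ioi δ⁻¹, μ {a | t < (D a)⁻¹} * ENNReal.ofReal (t ^ (s - 1)) = 0 := by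
    intro t ht
    have hempty : {a | t < (D a)⁻¹} = ∅ := Set.eq_empty_of_forall_notMem fun a ha =>
      (ha.trans_le (inv_anti₀ hδ (hDδ a))).not_gt ht
    rw [hempty, measure_empty, zero_mul]
  rw [lintegral_rpow_eq_lintegral_meas_lt_mul μ
    (.of_forall fun a => inv_nonneg.2 (hδ.le.trans (hDδ a))) hD.inv.aemeasurable hs,
    ← Set.Ioc_union_Ioi_eq_Ioi (inv_pos.2 hδ).le]
  gcongr
  calc _ ≤ _ := lintegral_union_le _ _ _
    _ = ∫⁻ t in Set.Ioc 0 δ⁻¹, μ {a | t < (D a)⁻¹} * ENNReal.ofReal (t ^ (s - 1)) := by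
        rw [setLIntegral_congr_fun measurableSet_Ioi hnear, lintegral_zero, add_zero]
    _ ≤ ∫⁻ t in Set.Ioc 0 δ⁻¹, ENNReal.ofReal A * ENNReal.ofReal (t ^ (s - d - 1)) :=
        setLIntegral_mono (by fun_prop) fun t ht => measure_lt_inv_mul_rpow_le hball ht.1
    _ = _ := by
        rw [lintegral_const_mul _ (by fun_prop), setLIntegral_Ioc_rpow (by linarith)
          (inv_pos.2 hδ).le, sub_add_cancel]

theorem mul_lintegral_inv_rpow_add_one_le (hD : Measurable D) (hδ : 0 ≤ δ) (hDδ : ∀ a, δ ≤ D a)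
    (hball : ∀ r > 0, μ.real {a | D a < r} ≤ A * r ^ d) (hd : 0 < d + 1) :
    ENNReal.ofReal δ * ∫⁻ a, ENNReal.ofReal ((D a)⁻¹ ^ (d + 1)) ∂μ ≤
      ENNReal.ofReal (d + 1) * ENNReal.ofReal A := by
  rcases hδ.eq_or_lt with rfl | hδ
  · simp
  have hbound := lintegral_inv_rpow_le_of_le hD hδ hDδ hball hd (lt_add_one d)
  rw [add_sub_cancel_left, Real.rpow_one, div_one, ← mul_assoc] at hbound
  calc _ ≤ ENNReal.ofReal δ *
        (ENNReal.ofReal (d + 1) * ENNReal.ofReal A * ENNReal.ofReal δ⁻¹) := by gcongr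
    _ = _ := by
        rw [mul_left_comm, ← ENNReal.ofReal_mul hδ.le, mul_inv_cancel₀ hδ.ne', ENNReal.ofReal_one,
          mul_one]

theorem lintegral_inv_rpow_le (hD : Measurable D) (hD0 : ∀ a, 0 ≤ D a)
    (hball : ∀ r > 0, μ.real {a | D a < r} ≤ A * r ^ d) (hs : 0 < s) (hds : s < d) :
    ∫⁻ a, ENNReal.ofReal ((D a)⁻¹ ^ s) ∂μ ≤
      ENNReal.ofReal s * (μ Set.univ * ENNReal.ofReal (1 / s)
        + ENNReal.ofReal A * ENNReal.ofReal (1 / (d - s))) := by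
  rw [lintegral_rpow_eq_lintegral_meas_lt_mul μ (.of_forall fun a => inv_nonneg.2 (hD0 a))
    hD.inv.aemeasurable hs, ← Set.Ioc_union_Ioi_eq_Ioi (zero_le_one' ℝ)]
  gcongr
  refine (lintegral_union_le _ _ _).trans (add_le_add ?_ ?_)
  · calc _ ≤ ∫⁻ t in Set.Ioc (0 : ℝ) 1, μ Set.univ * ENNReal.ofReal (t ^ (s - 1)) :=
          setLIntegral_mono (by fun_prop) fun t _ => by gcongr; exact Set.subset_univ _
      _ = _ := by
          rw [lintegral_const_mul _ (by fun_prop), setLIntegral_Ioc_rpow (by linarith) zero_le_one,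
            sub_add_cancel, Real.one_rpow]
  · calc _ ≤ ∫⁻ t in Set.Ioi (1 : ℝ), ENNReal.ofReal A * ENNReal.ofReal (t ^ (s - d - 1)) :=
          setLIntegral_mono (by fun_prop) fun t ht =>
            measure_lt_inv_mul_rpow_le hball (one_pos.trans ht)
      _ = _ := by
          rw [lintegral_const_mul _ (by fun_prop), setLIntegral_Ioi_rpow (by linarith) one_pos,
            sub_add_cancel, Real.one_rpow, neg_div, ← div_neg, neg_sub]

end Potentials

section DoubleLayer

variable {E : Type*} [NormedAddCommGroup E] [InnerProductSpace ℝ E]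

theorem abs_inner_sub_le_of_norm_eq_one {ω : E} (hω : ‖ω‖ = 1) (ξ : E) :
    |⟪ω, ξ - ω⟫| ≤ |‖ξ‖ - 1| + ‖ξ - ω‖ ^ 2 := by
  have hdist : |‖ξ‖ - 1| ≤ ‖ξ - ω‖ := hω ▸ abs_norm_sub_norm_le ξ ω
  have hinner : ⟪ω, ξ - ω⟫ = ((‖ξ‖ - 1) ^ 2 + 2 * (‖ξ‖ - 1) - ‖ξ - ω‖ ^ 2) / 2 := by
    rw [inner_sub_right, real_inner_self_eq_norm_sq, norm_sub_sq_real, hω, real_inner_comm]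
    ring
  have hsq : (‖ξ‖ - 1) ^ 2 ≤ ‖ξ - ω‖ ^ 2 := sq_le_sq' (by linarith [neg_abs_le (‖ξ‖ - 1)])
    ((le_abs_self _).trans hdist)
  rw [hinner, abs_le]
  constructor <;> nlinarith [le_abs_self (‖ξ‖ - 1), neg_abs_le (‖ξ‖ - 1)]

theorem abs_inner_mul_inv_le {ω : E} (hω : ‖ω‖ = 1) (ξ : E) {n : ℕ} (hn : 2 ≤ n) :
    |⟪ω, ξ - ω⟫| * (‖ξ - ω‖ ^ n)⁻¹ ≤
      |‖ξ‖ - 1| * ‖ξ - ω‖⁻¹ ^ (n : ℝ) + ‖ξ - ω‖⁻¹ ^ ((n - 2 : ℕ) : ℝ) := by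
  simp only [Real.rpow_natCast, inv_pow]
  calc _ ≤ (|‖ξ‖ - 1| + ‖ξ - ω‖ ^ 2) * (‖ξ - ω‖ ^ n)⁻¹ := by
        gcongr
        exact abs_inner_sub_le_of_norm_eq_one hω ξ
    _ = |‖ξ‖ - 1| * (‖ξ - ω‖ ^ n)⁻¹ + ‖ξ - ω‖ ^ 2 * (‖ξ - ω‖ ^ n)⁻¹ := add_mul _ _ _
    _ ≤ _ := by
        gcongr
        rcases eq_or_ne ‖ξ - ω‖ 0 with h | h
        · simp [h]
        · obtain ⟨k, rfl⟩ := Nat.exists_eq_add_of_le hn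
          rw [Nat.add_sub_cancel_left, pow_add, mul_inv, ← mul_assoc,
            mul_inv_cancel₀ (pow_ne_zero 2 h), one_mul]

open scoped Pointwise in
theorem Ioo_smul_cap_subset (ξ : E) {r : ℝ} (hr : r < 1) :
    Set.Ioo (0 : ℝ) 1 • ((↑) '' {ω : sphere (0 : E) 1 | ‖ξ - ω‖ < r} : Set E) ⊆
      (1 - r) • (Set.Ioo (0 : ℝ) 1 • ((↑) '' {ω : sphere (0 : E) 1 | ‖ξ - ω‖ < r} : Set E)) ∪
        ball ξ (2 * r) := by
  rintro _ ⟨t, ht, _, ⟨ω, hω, rfl⟩, rfl⟩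
  have hr' : 0 < 1 - r := sub_pos.2 hr
  rcases lt_or_ge t (1 - r) with htr | htr
  · refine .inl ⟨(t / (1 - r)) • (ω : E), Set.smul_mem_smul ⟨div_pos ht.1 hr', ?_⟩ ⟨ω, hω, rfl⟩, ?_⟩
    · rwa [div_lt_one hr']
    · simp only [smul_smul, mul_div_cancel₀ t hr'.ne']
  · refine .inr (mem_ball_iff_norm'.2 ?_)
    have hsplit : ξ - t • (ω : E) = (ξ - ω) + (1 - t) • (ω : E) := by module
    have hnorm : ‖(1 - t) • (ω : E)‖ = 1 - t := by
      rw [norm_smul, norm_eq_of_mem_sphere, mul_one, Real.norm_of_nonneg (sub_nonneg.2 ht.2.le)]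
    have hω' : ‖ξ - ω‖ < r := hω
    change ‖ξ - t • (ω : E)‖ < 2 * r
    linarith [hsplit ▸ norm_add_le (ξ - (ω : E)) ((1 - t) • (ω : E))]

variable [FiniteDimensional ℝ E] [MeasurableSpace E] [BorelSpace E]

open scoped Pointwise in
theorem volume_real_cone_cap_le [Nontrivial E] (ξ : E) {r : ℝ} (hr : 0 < r) (hr1 : r < 1) :
    (volume : Measure E).real
        (Set.Ioo (0 : ℝ) 1 • ((↑) '' {ω : sphere (0 : E) 1 | ‖ξ - ω‖ < r})) ≤
      2 ^ Module.finrank ℝ E * (volume : Measure E).real (ball 0 1)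
        * r ^ (Module.finrank ℝ E - 1) := by
  set n := Module.finrank ℝ E
  have hn : n ≠ 0 := Module.finrank_pos.ne'
  have h1r : 0 ≤ 1 - r := sub_nonneg.2 hr1.le
  set C := Set.Ioo (0 : ℝ) 1 • ((↑) '' {ω : sphere (0 : E) 1 | ‖ξ - ω‖ < r} : Set E)
  have hC : C ⊆ ball 0 1 := by
    rintro _ ⟨t, ht, _, ⟨ω, -, rfl⟩, rfl⟩
    simpa [norm_smul, abs_of_pos ht.1] using ht.2
  have hsmul : volume ((1 - r) • C) = ENNReal.ofReal ((1 - r) ^ n) * volume C :=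
    Measure.addHaar_smul_of_nonneg volume h1r C
  have hsmul_fin : volume ((1 - r) • C) ≠ ∞ := hsmul ▸ ENNReal.mul_ne_top ENNReal.ofReal_ne_top
    (measure_ne_top_of_subset hC measure_ball_lt_top.ne)
  have hsub : (volume : Measure E).real C ≤
      (1 - r) ^ n * (volume : Measure E).real C
        + (2 * r) ^ n * (volume : Measure E).real (ball 0 1) :=
    calc _ ≤ (volume : Measure E).real ((1 - r) • C ∪ ball ξ (2 * r)) :=
          measureReal_mono (Ioo_smul_cap_subset ξ hr1)
            (measure_union_ne_top hsmul_fin measure_ball_lt_top.ne)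
      _ ≤ _ := measureReal_union_le _ _
      _ = _ := by
          simp only [measureReal_def, hsmul, ENNReal.toReal_mul,
            Measure.addHaar_ball volume ξ (by positivity : 0 ≤ 2 * r)]
          rw [ENNReal.toReal_ofReal (by positivity), ENNReal.toReal_ofReal (by positivity)]
  have hpow : (1 - r) ^ n ≤ 1 - r := pow_le_of_le_one h1r (by linarith) hn
  have hrn : r ^ n = r ^ (n - 1) * r := (pow_sub_one_mul hn r).symm
  rw [mul_pow, hrn] at hsub
  refine le_of_mul_le_mul_right ?_ hr
  linarith [mul_le_mul_of_nonneg_right hpow (measureReal_nonneg (μ := volume) (s := C))]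

theorem toSphere_real_cap_le [Nontrivial E] (ξ : E) {r : ℝ} (hr : 0 < r) :
    (volume : Measure E).toSphere.real {ω | ‖ξ - ω‖ < r} ≤
      Module.finrank ℝ E * (2 ^ Module.finrank ℝ E * (volume : Measure E).real (ball 0 1)
        * r ^ (Module.finrank ℝ E - 1)) := by
  rcases le_or_gt 1 r with h1r | hr1
  · calc _ ≤ (volume : Measure E).toSphere.real Set.univ := measureReal_mono (Set.subset_univ _)
      _ = Module.finrank ℝ E * (1 * (volume : Measure E).real (ball 0 1) * 1) := by
          rw [Measure.toSphere_real_apply_univ, one_mul, mul_one]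
      _ ≤ _ := by
          gcongr
          · exact one_le_pow₀ one_le_two
          · exact one_le_pow₀ h1r
  · have hmeas : MeasurableSet {ω : sphere (0 : E) 1 | ‖ξ - ω‖ < r} :=
      measurableSet_lt (by fun_prop) measurable_const
    rw [measureReal_def, Measure.toSphere_apply' _ hmeas, ENNReal.toReal_mul,
      ENNReal.toReal_natCast]
    gcongr
    exact volume_real_cone_cap_le ξ hr hr1

theorem exists_lintegral_double_layer_le (hn : 3 ≤ Module.finrank ℝ E) :
    ∃ C : ℝ, ∀ ξ : E, ∫⁻ ω : sphere (0 : E) 1,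
      ENNReal.ofReal (|⟪(ω : E), ξ - ω⟫| * (‖ξ - ω‖ ^ Module.finrank ℝ E)⁻¹)
        ∂(volume : Measure E).toSphere ≤ ENNReal.ofReal C := by
  have : Nontrivial E := Module.nontrivial_of_finrank_pos (R := ℝ) (by omega)
  set n := Module.finrank ℝ E
  set σ := (volume : Measure E).toSphere
  have hcast : ((n - 2 : ℕ) : ℝ) = n - 2 := by exact_mod_cast Nat.cast_sub (by omega)
  obtain ⟨A, hcap⟩ : ∃ A, ∀ ξ : E, ∀ r > 0, σ.real {ω | ‖ξ - ω‖ < r} ≤ A * r ^ ((n : ℝ) - 1) :=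
    ⟨_, fun ξ r hr => (toSphere_real_cap_le ξ hr).trans_eq <| by
      rw [← mul_assoc, ← Real.rpow_natCast r, Nat.cast_sub (by omega), Nat.cast_one]⟩
  set B := ENNReal.ofReal ((n - 2 : ℕ) : ℝ) * (σ Set.univ * ENNReal.ofReal (1 / (n - 2 : ℕ))
    + ENNReal.ofReal A * ENNReal.ofReal (1 / (n - 1 - (n - 2 : ℕ))))
  have hB_fin : ENNReal.ofReal n * ENNReal.ofReal A + B ≠ ∞ := by finiteness
  refine ⟨(ENNReal.ofReal n * ENNReal.ofReal A + B).toReal, fun ξ => ?_⟩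
  rw [ENNReal.ofReal_toReal hB_fin]
  have hmeas : Measurable fun ω : sphere (0 : E) 1 => ‖ξ - ω‖ := by fun_prop
  have hfar := mul_lintegral_inv_rpow_add_one_le hmeas (abs_nonneg (‖ξ‖ - 1))
    (fun ω => by simpa using abs_norm_sub_norm_le ξ (ω : E)) (hcap ξ)
    (by rw [sub_add_cancel]; positivity)
  rw [sub_add_cancel] at hfar
  have hnear : ∫⁻ ω, ENNReal.ofReal (‖ξ - ω‖⁻¹ ^ ((n - 2 : ℕ) : ℝ)) ∂σ ≤ B :=
    lintegral_inv_rpow_le hmeas (fun _ => norm_nonneg _) (hcap ξ)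
      (by exact_mod_cast (by omega : 0 < n - 2)) (by linarith)
  calc _ ≤ ∫⁻ ω : sphere (0 : E) 1, ENNReal.ofReal |‖ξ‖ - 1| * ENNReal.ofReal (‖ξ - ω‖⁻¹ ^ (n : ℝ))
        + ENNReal.ofReal (‖ξ - ω‖⁻¹ ^ ((n - 2 : ℕ) : ℝ)) ∂σ := by
        refine lintegral_mono fun ω => ?_
        rw [← ENNReal.ofReal_mul (by positivity),
          ← ENNReal.ofReal_add (by positivity) (by positivity)]
        exact ENNReal.ofReal_le_ofReal
          (abs_inner_mul_inv_le (norm_eq_of_mem_sphere ω) ξ (by omega))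
    _ ≤ _ := by
        rw [lintegral_add_left (by fun_prop), lintegral_const_mul _ (by fun_prop)]
        gcongr

end DoubleLayer

theorem lintegral_rpow_mul_exp_neg_div {s a : ℝ} (hs : 0 < s) (ha : 0 < a) :
    ∫⁻ t in Set.Ioi (0 : ℝ), ENNReal.ofReal (t ^ (-s - 1) * rexp (-(a / t))) =
      ENNReal.ofReal ((1 / a) ^ s * Real.Gamma s) := by
  have hinv := integral_comp_rpow_Ioi (fun u : ℝ => u ^ (s - 1) * rexp (-(a * u)))
    (p := -1) (by norm_num)
  rw [Real.integral_rpow_mul_exp_neg_mul_Ioi hs ha] at hinv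
  have hval : ∫ t in Set.Ioi (0 : ℝ), t ^ (-s - 1) * rexp (-(a / t)) =
      (1 / a) ^ s * Real.Gamma s := by
    rw [← hinv]
    refine setIntegral_congr_fun measurableSet_Ioi fun t (ht : 0 < t) => ?_
    simp only [smul_eq_mul, abs_neg, abs_one, one_mul]
    rw [← Real.rpow_mul ht.le, ← mul_assoc, ← Real.rpow_add ht, Real.rpow_neg_one,
      ← div_eq_mul_inv]
    congr 2
    ring
  have hpos : 0 < (1 / a) ^ s * Real.Gamma s := by
    have := Real.Gamma_pos_of_pos hs
    positivity
  have hint : IntegrableOn (fun t : ℝ => t ^ (-s - 1) * rexp (-(a / t))) (Set.Ioi 0) :=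
    not_imp_comm.1 integral_undef (hval ▸ hpos.ne')
  rw [← hval, ofReal_integral_eq_lintegral_ofReal hint]
  filter_upwards [ae_restrict_mem measurableSet_Ioi] with t (ht : 0 < t)
  positivity

section HeatKernel

variable {E : Type*} [NormedAddCommGroup E] [InnerProductSpace ℝ E]

/-- The Gaussian on `E` whose Fourier transform is `x ↦ exp (-t ‖x‖²)`. -/
def heatKernel (t : ℝ) (v : E) : ℝ :=
  (π / t) ^ ((Module.finrank ℝ E : ℝ) / 2) * rexp (-(π ^ 2 / t) * ‖v‖ ^ 2)

/-- Minus the derivative of the heat kernel in the direction `ω`, centred at `ω`: the potential of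
a dipole on the unit sphere. -/
def heatDipole (t : ℝ) (ω ξ : E) : ℝ :=
  2 * (π ^ 2 / t) * (⟪ω, ξ - ω⟫ * heatKernel t (ξ - ω))

variable {t : ℝ}

theorem heatKernel_pos (ht : 0 < t) (v : E) : 0 < heatKernel t v := by
  unfold heatKernel
  positivity

theorem norm_heatDipole (ht : 0 < t) (ω ξ : E) :
    ‖heatDipole t ω ξ‖ = 2 * (π ^ 2 / t) * (|⟪ω, ξ - ω⟫| * heatKernel t (ξ - ω)) := by
  simp only [heatDipole, norm_mul, Real.norm_eq_abs, abs_of_pos (heatKernel_pos ht _)]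
  rw [abs_of_pos (by positivity : 0 < π ^ 2 / t), abs_two]

theorem mul_exp_neg_sq_le (s : ℝ) : s * rexp (-s ^ 2) ≤ rexp (-(s ^ 2 / 2)) := by
  have hs : s ≤ rexp (s ^ 2 / 2) := by
    nlinarith [Real.add_one_le_exp (s ^ 2 / 2), sq_nonneg (s - 1)]
  calc s * rexp (-s ^ 2) ≤ rexp (s ^ 2 / 2) * rexp (-s ^ 2) := by gcongr
    _ = _ := by rw [← Real.exp_add]; congr 1; ring

theorem norm_mul_heatKernel_le (ht : 0 < t) (v : E) :
    π / √t * (‖v‖ * heatKernel t v) ≤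
      2 ^ ((Module.finrank ℝ E : ℝ) / 2) * heatKernel (2 * t) v := by
  have hgauss := mul_exp_neg_sq_le (π / √t * ‖v‖)
  have hdouble : π / t = 2 * (π / (2 * t)) := by field_simp
  rw [mul_pow, div_pow, Real.sq_sqrt ht.le, ← neg_mul] at hgauss
  rw [heatKernel, heatKernel, hdouble, Real.mul_rpow (by positivity) (by positivity)]
  calc _ = 2 ^ ((Module.finrank ℝ E : ℝ) / 2) * ((π / (2 * t)) ^ ((Module.finrank ℝ E : ℝ) / 2) *
        (π / √t * ‖v‖ * rexp (-(π ^ 2 / t) * ‖v‖ ^ 2))) := by ring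
    _ ≤ 2 ^ ((Module.finrank ℝ E : ℝ) / 2) * ((π / (2 * t)) ^ ((Module.finrank ℝ E : ℝ) / 2) *
        rexp (-(π ^ 2 / t * ‖v‖ ^ 2 / 2))) := by gcongr
    _ = _ := by congr 3; field_simp

theorem hasLineDerivAt_heatKernel (t : ℝ) (v ω : E) :
    HasLineDerivAt ℝ (fun v : E => (heatKernel t v : ℂ))
      (-(2 * (π ^ 2 / t) * (⟪ω, v⟫ * heatKernel t v) : ℝ) : ℂ) v ω := by
  have hline : HasDerivAt (fun s : ℝ => v + s • ω) ω 0 := by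
    simpa using ((hasDerivAt_id (0 : ℝ)).smul_const ω).const_add v
  have hder := (((hline.norm_sq.const_mul (-(π ^ 2 / t))).exp).const_mul
    ((π / t) ^ ((Module.finrank ℝ E : ℝ) / 2))).ofReal_comp
  refine hder.congr_deriv ?_
  rw [zero_smul, add_zero, real_inner_comm v ω, heatKernel, ← ofReal_neg]
  congr 1
  ring

theorem hasLineDerivAt_cexp_phase (x v ω : E) :
    HasLineDerivAt ℝ (fun v : E => cexp (phase x v)) (phase x ω * cexp (phase x v)) v ω := by
  simpa [mul_comm] using ((phase x).hasFDerivAt (x := v)).cexp.hasLineDerivAt ω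

theorem integrable_mul_cexp_phase {α : Type*} [MeasurableSpace α] {μ : Measure α} {φ : α → ℂ}
    {x v : α → E} (hφ : Integrable φ μ)
    (hphase : AEStronglyMeasurable (fun a => cexp (phase (x a) (v a))) μ) :
    Integrable (fun a => φ a * cexp (phase (x a) (v a))) μ :=
  hφ.mul_bdd (c := 1) hphase (.of_forall fun a => (norm_cexp_phase (x a) (v a)).le)

theorem exists_lintegral_heatDipole_time_le (hn : 0 < Module.finrank ℝ E) :
    ∃ C, 0 ≤ C ∧ ∀ ω ξ : E, ∫⁻ t in Set.Ioi (0 : ℝ), ‖heatDipole t ω ξ‖ₑ ≤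
      ENNReal.ofReal (C * (|⟪ω, ξ - ω⟫| * (‖ξ - ω‖ ^ Module.finrank ℝ E)⁻¹)) := by
  set s := (Module.finrank ℝ E : ℝ) / 2 with hs
  have hs0 : 0 < s := by positivity
  refine ⟨π ^ s * (2 * π ^ 2) * ((1 / π ^ 2) ^ s * Real.Gamma s), by positivity, fun ω ξ => ?_⟩
  rcases eq_or_ne ξ ω with rfl | hne
  · simp [heatDipole]
  have hpos : 0 < ‖ξ - ω‖ := norm_sub_pos_iff.2 hne
  have hdipole (t : ℝ) (ht : 0 < t) : ‖heatDipole t ω ξ‖ₑ =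
      ENNReal.ofReal (π ^ s * (2 * π ^ 2) * |⟪ω, ξ - ω⟫|) *
        ENNReal.ofReal (t ^ (-s - 1) * rexp (-(π ^ 2 * ‖ξ - ω‖ ^ 2 / t))) := by
    rw [← ofReal_norm, ← ENNReal.ofReal_mul (by positivity), norm_heatDipole ht, heatKernel, ← hs,
      Real.div_rpow Real.pi_pos.le ht.le, Real.rpow_sub ht, Real.rpow_neg ht.le, Real.rpow_one,
      neg_mul, div_mul_eq_mul_div]
    congr 1
    field_simp
  have hscale : (1 / (π ^ 2 * ‖ξ - ω‖ ^ 2)) ^ s =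
      (1 / π ^ 2) ^ s * (‖ξ - ω‖ ^ Module.finrank ℝ E)⁻¹ := by
    rw [← div_div, div_eq_mul_inv, Real.mul_rpow (by positivity) (by positivity),
      Real.inv_rpow (by positivity), ← Real.rpow_natCast ‖ξ - ω‖ 2, ← Real.rpow_mul hpos.le,
      ← Real.rpow_natCast ‖ξ - ω‖, Nat.cast_two, hs, mul_div_cancel₀ _ two_ne_zero]
  rw [setLIntegral_congr_fun measurableSet_Ioi hdipole, lintegral_const_mul _ (by fun_prop),
    lintegral_rpow_mul_exp_neg_div hs0 (by positivity), ← ENNReal.ofReal_mul (by positivity),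
    hscale]
  exact ENNReal.ofReal_le_ofReal (le_of_eq (by ring))

variable [FiniteDimensional ℝ E] [MeasurableSpace E] [BorelSpace E]

theorem integrable_heatKernel (ht : 0 < t) : Integrable (heatKernel t : E → ℝ) := by
  have hgauss := (GaussianFourier.integrable_cexp_neg_mul_sq_norm_add (V := E)
    (b := ((π ^ 2 / t : ℝ) : ℂ)) (by rw [ofReal_re]; positivity) 0 0).norm
  refine (hgauss.congr (.of_forall fun v => ?_)).const_mul _
  simp only [zero_mul, add_zero, ← ofReal_pow, ← ofReal_neg, ← ofReal_mul, norm_exp_ofReal]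

theorem integrable_inner_mul_heatKernel (ht : 0 < t) (ω : E) :
    Integrable fun v : E => ⟪ω, v⟫ * heatKernel t v := by
  refine (((integrable_heatKernel (E := E) (mul_pos two_pos ht)).const_mul
    (2 ^ ((Module.finrank ℝ E : ℝ) / 2))).const_mul (‖ω‖ * (√t / π))).mono'
    (Continuous.aestronglyMeasurable (by unfold heatKernel; fun_prop)) (.of_forall fun v => ?_)
  rw [norm_mul, Real.norm_of_nonneg (heatKernel_pos ht v).le]
  calc ‖⟪ω, v⟫‖ * heatKernel t v ≤ ‖ω‖ * ‖v‖ * heatKernel t v := by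
        gcongr
        · exact (heatKernel_pos ht v).le
        · exact abs_real_inner_le_norm ω v
    _ = ‖ω‖ * (√t / π) * (π / √t * (‖v‖ * heatKernel t v)) := by field_simp
    _ ≤ _ := mul_le_mul_of_nonneg_left (norm_mul_heatKernel_le ht v) (by positivity)


theorem integral_heatKernel_mul_cexp_phase (ht : 0 < t) (x : E) :
    ∫ v, (heatKernel t v : ℂ) * cexp (phase x v) = rexp (-t * ‖x‖ ^ 2) := by
  have hgauss := GaussianFourier.integral_cexp_neg_mul_sq_norm_add (V := E)
    (b := ((π ^ 2 / t : ℝ) : ℂ)) (by rw [ofReal_re]; positivity) (2 * π * I) x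
  have hmass : (π / t) ^ ((Module.finrank ℝ E : ℝ) / 2) *
      (π / (π ^ 2 / t)) ^ ((Module.finrank ℝ E : ℝ) / 2) = 1 := by
    rw [← Real.mul_rpow (by positivity) (by positivity), show π / t * (π / (π ^ 2 / t)) = 1 by
      field_simp, Real.one_rpow]
  have hexp : (2 * π * I) ^ 2 * ‖x‖ ^ 2 / (4 * ((π ^ 2 / t : ℝ) : ℂ)) =
      ((-t * ‖x‖ ^ 2 : ℝ) : ℂ) := by
    have : (t : ℂ) ≠ 0 := ofReal_ne_zero.2 ht.ne'
    have : (π : ℂ) ≠ 0 := ofReal_ne_zero.2 Real.pi_ne_zero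
    push_cast
    field_simp
    rw [I_sq]
    ring
  have hpow : (π / ((π ^ 2 / t : ℝ) : ℂ)) ^ ((Module.finrank ℝ E : ℂ) / 2) =
      (((π / (π ^ 2 / t)) ^ ((Module.finrank ℝ E : ℝ) / 2) : ℝ) : ℂ) := by
    rw [ofReal_cpow (by positivity)]
    push_cast
    rfl
  rw [hexp, hpow] at hgauss
  calc _ = ∫ v : E, (((π / t) ^ ((Module.finrank ℝ E : ℝ) / 2) : ℝ) : ℂ) *
        cexp (-((π ^ 2 / t : ℝ) : ℂ) * ‖v‖ ^ 2 + 2 * π * I * (⟪x, v⟫ : ℝ)) := by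
        congr 1 with v
        rw [heatKernel, ofReal_mul, mul_assoc, ofReal_exp, ← Complex.exp_add, phase_apply]
        push_cast
        rfl
    _ = _ := by
        rw [integral_const_mul, hgauss, ← mul_assoc, ← ofReal_mul, hmass, ofReal_one, one_mul,
          ofReal_exp]

theorem integral_inner_mul_heatKernel_mul_cexp_phase (ht : 0 < t) (ω x : E) :
    ∫ v, ((2 * (π ^ 2 / t) * (⟪ω, v⟫ * heatKernel t v) : ℝ) : ℂ) * cexp (phase x v) =
      phase x ω * rexp (-t * ‖x‖ ^ 2) := by
  have hphase : AEStronglyMeasurable (fun v : E => cexp (phase x v)) :=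
    Continuous.aestronglyMeasurable (by fun_prop)
  have hmoment : Integrable fun v =>
      ((2 * (π ^ 2 / t) * (⟪ω, v⟫ * heatKernel t v) : ℝ) : ℂ) * cexp (phase x v) :=
    integrable_mul_cexp_phase ((integrable_inner_mul_heatKernel ht ω).const_mul _).ofReal hphase
  have hkernel : Integrable fun v => (heatKernel t v : ℂ) * cexp (phase x v) :=
    integrable_mul_cexp_phase (integrable_heatKernel ht).ofReal hphase
  have hparts := integral_bilinear_hasLineDerivAt_right_eq_neg_left_of_integrable
    (B := ContinuousLinearMap.mul ℝ ℂ)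
    (by simpa only [ContinuousLinearMap.mul_apply', neg_mul, ofReal_neg] using hmoment.fun_neg)
    (by simpa only [ContinuousLinearMap.mul_apply', mul_left_comm] using
      hkernel.const_mul (phase x ω))
    hkernel (fun v _ => hasLineDerivAt_heatKernel t v ω)
    (fun v _ => hasLineDerivAt_cexp_phase x v ω)
  simp only [ContinuousLinearMap.mul_apply', neg_mul, integral_neg, neg_neg, integral_const_mul,
    mul_left_comm _ (phase x ω)] at hparts
  rw [← hparts, integral_heatKernel_mul_cexp_phase ht]

theorem integral_heatDipole_mul_cexp_phase (ht : 0 < t) (ω x : E) :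
    ∫ ξ, (heatDipole t ω ξ : ℂ) * cexp (phase x ξ) =
      rexp (-t * ‖x‖ ^ 2) * (phase x ω * cexp (phase x ω)) := by
  rw [← integral_add_right_eq_self _ ω]
  simp only [heatDipole, add_sub_cancel_right, map_add, Complex.exp_add,
    ← mul_assoc _ (cexp (phase x _)), integral_mul_const]
  rw [integral_inner_mul_heatKernel_mul_cexp_phase ht]
  ring

theorem integral_heatKernel (ht : 0 < t) : ∫ v : E, heatKernel t v = 1 := by
  have h := integral_heatKernel_mul_cexp_phase ht (0 : E)
  simp only [map_zero, zero_apply, Complex.exp_zero, mul_one, integral_complex_ofReal] at h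
  simpa using h

theorem lintegral_heatDipole_le (ht : 0 < t) {ω : E} (hω : ‖ω‖ = 1) :
    ∫⁻ ξ, ‖heatDipole t ω ξ‖ₑ ≤
      ENNReal.ofReal (2 * (π / √t) * 2 ^ ((Module.finrank ℝ E : ℝ) / 2)) := by
  set c : ℝ := 2 * (π / √t) * 2 ^ ((Module.finrank ℝ E : ℝ) / 2)
  have hbound (ξ : E) : ‖heatDipole t ω ξ‖ ≤ c * heatKernel (2 * t) (ξ - ω) :=
    calc _ = 2 * (π ^ 2 / t) * (|⟪ω, ξ - ω⟫| * heatKernel t (ξ - ω)) := norm_heatDipole ht ω ξ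
      _ ≤ 2 * (π ^ 2 / t) * (‖ξ - ω‖ * heatKernel t (ξ - ω)) := by
          gcongr
          · exact (heatKernel_pos ht _).le
          · simpa [hω] using abs_real_inner_le_norm ω (ξ - ω)
      _ = 2 * (π / √t) * (π / √t * (‖ξ - ω‖ * heatKernel t (ξ - ω))) := by
          nth_rw 1 [← Real.sq_sqrt ht.le]
          ring
      _ ≤ 2 * (π / √t) * (2 ^ ((Module.finrank ℝ E : ℝ) / 2) * heatKernel (2 * t) (ξ - ω)) :=
          mul_le_mul_of_nonneg_left (norm_mul_heatKernel_le ht _) (by positivity)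
      _ = _ := (mul_assoc _ _ _).symm
  have hint : Integrable fun ξ => c * heatKernel (2 * t) (ξ - ω) :=
    ((integrable_heatKernel (mul_pos two_pos ht)).comp_sub_right ω).const_mul c
  calc _ ≤ ∫⁻ ξ, ENNReal.ofReal (c * heatKernel (2 * t) (ξ - ω)) :=
        lintegral_mono fun ξ => by
          rw [← ofReal_norm]
          exact ENNReal.ofReal_le_ofReal (hbound ξ)
    _ = ENNReal.ofReal (∫ ξ, c * heatKernel (2 * t) (ξ - ω)) :=
        (ofReal_integral_eq_lintegral_ofReal hint
          (.of_forall fun ξ => (norm_nonneg _).trans (hbound ξ))).symm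
    _ = _ := by
        rw [integral_const_mul, integral_sub_right_eq_self (heatKernel (2 * t)),
          integral_heatKernel (mul_pos two_pos ht), mul_one]

theorem measurable_heatDipole : Measurable fun q : (ℝ × E) × E => heatDipole q.1.1 q.1.2 q.2 := by
  unfold heatDipole heatKernel
  fun_prop

end HeatKernel

section Subordination

variable {E : Type*} [NormedAddCommGroup E] [InnerProductSpace ℝ E] {w : ℂ}

/-- The integrand, over dilations `t` and points `ω` of the sphere, of the multiplier whose
inverse Fourier transform is `Γ(w) (1 + ‖x‖²) ^ (-w) K̃(x)`. -/
def subordinationDensity (w : ℂ) (a : ℝ × sphere (0 : E) 1) (ξ : E) : ℂ :=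
  a.1 ^ (w - 1) * rexp (-a.1) * heatDipole a.1 (a.2 : E) ξ

theorem enorm_subordinationDensity {a : ℝ × sphere (0 : E) 1} (ha : 0 < a.1) (ξ : E) :
    ‖subordinationDensity w a ξ‖ₑ =
      ENNReal.ofReal (rexp (-a.1) * a.1 ^ (w.re - 1)) * ‖heatDipole a.1 (a.2 : E) ξ‖ₑ := by
  have hre : (w - 1).re = w.re - 1 := by simp
  rw [← ofReal_norm, ← ofReal_norm, ← ENNReal.ofReal_mul (by positivity), subordinationDensity,
    norm_mul, norm_mul, norm_cpow_eq_rpow_re_of_pos ha, hre, norm_real, norm_real,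
    Real.norm_of_nonneg (Real.exp_pos _).le, mul_comm (a.1 ^ _)]

variable [FiniteDimensional ℝ E] [MeasurableSpace E] [BorelSpace E]

/-- The product of Lebesgue measure on `(0, ∞)` and the surface measure of the unit sphere. -/
def subordinationMeasure : Measure (ℝ × sphere (0 : E) 1) :=
  (volume.restrict (Set.Ioi 0)).prod (volume : Measure E).toSphere

instance : SFinite (subordinationMeasure (E := E)) := by
  unfold subordinationMeasure
  infer_instance

theorem measurable_subordinationDensity (w : ℂ) :
    Measurable fun q : (ℝ × sphere (0 : E) 1) × E => subordinationDensity w q.1 q.2 := by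
  have hdipole : Measurable fun q : (ℝ × sphere (0 : E) 1) × E =>
      heatDipole q.1.1 (q.1.2 : E) q.2 :=
    measurable_heatDipole.comp (by fun_prop :
      Measurable fun q : (ℝ × sphere (0 : E) 1) × E => ((q.1.1, (q.1.2 : E)), q.2))
  unfold subordinationDensity
  fun_prop

theorem lintegral_enorm_subordinationDensity_le {a : ℝ × sphere (0 : E) 1} (ha : 0 < a.1) :
    ∫⁻ ξ, ‖subordinationDensity w a ξ‖ₑ ≤
      ENNReal.ofReal (2 * π * 2 ^ ((Module.finrank ℝ E : ℝ) / 2) *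
        (rexp (-a.1) * a.1 ^ (w.re - 1 / 2 - 1))) := by
  have hpow : a.1 ^ (w.re - 1) = a.1 ^ (w.re - 1 / 2 - 1) * √a.1 := by
    rw [Real.sqrt_eq_rpow, ← Real.rpow_add ha]
    ring_nf
  simp only [enorm_subordinationDensity ha]
  rw [lintegral_const_mul' _ _ ENNReal.ofReal_ne_top]
  grw [lintegral_heatDipole_le ha (by simp)]
  rw [← ENNReal.ofReal_mul (by positivity), hpow]
  refine (congrArg ENNReal.ofReal ?_).le
  field_simp

theorem integrable_subordinationDensity (hw : 1 / 2 < w.re) :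
    Integrable (fun q : (ℝ × sphere (0 : E) 1) × E => subordinationDensity w q.1 q.2)
      (subordinationMeasure.prod volume) := by
  have hmeas := measurable_subordinationDensity (E := E) w
  refine ⟨hmeas.aestronglyMeasurable, ?_⟩
  rw [HasFiniteIntegral, lintegral_prod _ hmeas.enorm.aemeasurable, subordinationMeasure,
    lintegral_prod _ hmeas.enorm.lintegral_prod_right'.aemeasurable]
  refine (setLIntegral_mono' measurableSet_Ioi fun t ht =>
    lintegral_mono fun ω => lintegral_enorm_subordinationDensity_le (a := (t, ω)) ht).trans_lt ?_
  simp only [lintegral_const]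
  rw [lintegral_mul_const _ (by fun_prop)]
  exact ENNReal.mul_lt_top ((Real.GammaIntegral_convergent (by linarith)).const_mul
    _).lintegral_lt_top (measure_lt_top _ _)

/-- The Fourier multiplier that represents `Γ(w) (1 + ‖x‖²) ^ (-w) K̃(x)`. -/
def subordinationMultiplier (w : ℂ) (ξ : E) : ℂ :=
  ∫ a, subordinationDensity w a ξ ∂subordinationMeasure

theorem integrable_subordinationMultiplier (hw : 1 / 2 < w.re) :
    Integrable (subordinationMultiplier (E := E) w) :=
  (integrable_subordinationDensity hw).integral_prod_right

-- At `Re w = 1` the power of `t` has modulus `1`, which leaves the scale-invariant time integral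
-- of the heat dipole, that is, a double-layer potential.
theorem exists_norm_subordinationMultiplier_le (hn : 3 ≤ Module.finrank ℝ E) :
    ∃ B : ℝ, 0 ≤ B ∧ ∀ w : ℂ, w.re = 1 → ∀ ξ : E, ‖subordinationMultiplier w ξ‖ ≤ B := by
  obtain ⟨D, hD⟩ := exists_lintegral_double_layer_le (E := E) hn
  obtain ⟨T, hT, htime⟩ := exists_lintegral_heatDipole_time_le (E := E) (by lia)
  refine ⟨T * max D 0, by positivity, fun w hw ξ => ?_⟩
  have hslice : Measurable fun a => ‖subordinationDensity w a ξ‖ₑ :=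
    ((measurable_subordinationDensity w).comp measurable_prodMk_right).enorm
  have hdom (ω : sphere (0 : E) 1) : ∫⁻ t in Set.Ioi 0, ‖subordinationDensity w (t, ω) ξ‖ₑ ≤
      ENNReal.ofReal T * ENNReal.ofReal (|⟪(ω : E), ξ - ω⟫| *
        (‖ξ - (ω : E)‖ ^ Module.finrank ℝ E)⁻¹) := by
    rw [← ENNReal.ofReal_mul hT]
    refine (setLIntegral_mono' measurableSet_Ioi fun t (ht : 0 < t) => ?_).trans (htime ω ξ)
    have hexp : ENNReal.ofReal (rexp (-t) * t ^ (w.re - 1)) ≤ 1 := by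
      simpa [hw] using ht.le
    simpa only [enorm_subordinationDensity (a := (t, ω)) ht] using mul_le_of_le_one_left' hexp
  rw [← ENNReal.ofReal_le_ofReal_iff (by positivity), ofReal_norm]
  calc ‖subordinationMultiplier w ξ‖ₑ
      ≤ ∫⁻ a, ‖subordinationDensity w a ξ‖ₑ ∂subordinationMeasure :=
        enorm_integral_le_lintegral_enorm _
    _ = ∫⁻ ω : sphere (0 : E) 1, (∫⁻ t in Set.Ioi 0, ‖subordinationDensity w (t, ω) ξ‖ₑ)
          ∂volume.toSphere := lintegral_prod_symm _ hslice.aemeasurable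
    _ ≤ ENNReal.ofReal T * ENNReal.ofReal D := by
        grw [lintegral_mono hdom, lintegral_const_mul' _ _ ENNReal.ofReal_ne_top, hD ξ]
    _ ≤ ENNReal.ofReal (T * max D 0) := by
        rw [← ENNReal.ofReal_mul hT]
        gcongr
        exact le_max_left _ _

theorem integral_subordinationDensity_mul_cexp_phase {a : ℝ × sphere (0 : E) 1} (ha : 0 < a.1)
    (x : E) :
    ∫ ξ, subordinationDensity w a ξ * cexp (phase x ξ) =
      (a.1 : ℂ) ^ (w - 1) * cexp (-((1 + ‖x‖ ^ 2 : ℝ) * a.1 : ℂ)) *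
        (phase x a.2 * cexp (phase x a.2)) := by
  have hexp : cexp (-((1 + ‖x‖ ^ 2 : ℝ) * a.1 : ℂ)) = rexp (-a.1) * rexp (-a.1 * ‖x‖ ^ 2) := by
    push_cast
    rw [← Complex.exp_add]
    ring_nf
  simp only [subordinationDensity, mul_assoc ((a.1 : ℂ) ^ (w - 1) * _)]
  rw [integral_const_mul, integral_heatDipole_mul_cexp_phase ha, hexp]
  ring

theorem Gamma_mul_eulerKernel_mul_cpow (hw : 1 / 2 < w.re) (x : E) :
    Complex.Gamma w * (eulerKernel x * ((1 + ‖x‖ ^ 2 : ℝ) : ℂ) ^ (-w)) =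
      ∫ ξ, subordinationMultiplier w ξ * cexp (phase x ξ) := by
  have hr : 0 < 1 + ‖x‖ ^ 2 := by positivity
  have hpow : (1 / ((1 + ‖x‖ ^ 2 : ℝ) : ℂ)) ^ w = ((1 + ‖x‖ ^ 2 : ℝ) : ℂ) ^ (-w) := by
    rw [one_div, inv_cpow _ _ (by rw [arg_ofReal_of_nonneg hr.le]; exact Real.pi_pos.ne), cpow_neg]
  have hphase : AEStronglyMeasurable
      (fun q : (ℝ × sphere (0 : E) 1) × E => cexp (phase x q.2))
      (subordinationMeasure.prod volume) := Continuous.aestronglyMeasurable (by fun_prop)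
  have hae : ∀ᵐ a ∂subordinationMeasure (E := E), 0 < a.1 :=
    Measure.quasiMeasurePreserving_fst.ae (ae_restrict_mem measurableSet_Ioi)
  symm
  calc ∫ ξ : E, subordinationMultiplier w ξ * cexp (phase x ξ)
      = ∫ ξ, ∫ a, subordinationDensity w a ξ * cexp (phase x ξ) ∂subordinationMeasure := by
        simp only [subordinationMultiplier, integral_mul_const]
    _ = ∫ a, (∫ ξ, subordinationDensity w a ξ * cexp (phase x ξ)) ∂subordinationMeasure :=
        (integral_integral_swap (integrable_mul_cexp_phase (integrable_subordinationDensity hw)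
          hphase)).symm
    _ = ∫ a : ℝ × sphere (0 : E) 1, (a.1 : ℂ) ^ (w - 1) *
          cexp (-((1 + ‖x‖ ^ 2 : ℝ) * a.1 : ℂ)) * (phase x a.2 * cexp (phase x a.2))
          ∂subordinationMeasure :=
        integral_congr_ae (hae.mono fun a ha => integral_subordinationDensity_mul_cexp_phase ha x)
    _ = (∫ t in Set.Ioi (0 : ℝ), (t : ℂ) ^ (w - 1) * cexp (-((1 + ‖x‖ ^ 2 : ℝ) * t : ℂ))) *
          eulerKernel x :=
        integral_prod_mul (μ := volume.restrict (Set.Ioi 0)) (ν := (volume : Measure E).toSphere)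
          (fun t : ℝ => (t : ℂ) ^ (w - 1) * cexp (-((1 + ‖x‖ ^ 2 : ℝ) * t : ℂ)))
          fun ω => phase x (ω : E) * cexp (phase x (ω : E))
    _ = Complex.Gamma w * (eulerKernel x * ((1 + ‖x‖ ^ 2 : ℝ) : ℂ) ^ (-w)) := by
        rw [Complex.integral_cpow_mul_exp_neg_mul_Ioi (by linarith) (by simpa using hr), hpow]
        ring

end Subordination

section GammaBound

theorem sinh_le_mul_exp (u : ℝ) : Real.sinh u ≤ u * rexp u := by
  rw [Real.sinh_eq]
  have hlow := Real.add_one_le_exp (-2 * u)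
  have hsplit : rexp (-u) = rexp u * rexp (-2 * u) := by rw [← Real.exp_add]; ring_nf
  rw [hsplit]
  nlinarith [Real.exp_pos u]

theorem norm_Gamma_one_add_mul_I_sq_mul_sinh {s : ℝ} (hs : s ≠ 0) :
    ‖Complex.Gamma (1 + s * I)‖ ^ 2 * Real.sinh (π * |s|) = π * |s| := by
  have hsI : (s : ℂ) * I ≠ 0 := mul_ne_zero (by exact_mod_cast hs) I_ne_zero
  have hsinh : Complex.sin (π * (s * I)) = Real.sinh (π * s) * I := by
    rw [← mul_assoc, ← ofReal_mul, Complex.sin_mul_I, ← ofReal_sinh]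
  have hsin : Complex.sin (π * (s * I)) ≠ 0 := by
    rw [hsinh]
    refine mul_ne_zero (ofReal_ne_zero.2 ?_) I_ne_zero
    simpa using hs
  have hreflect : Complex.Gamma (1 + s * I) * Complex.Gamma (1 - s * I) *
      Complex.sin (π * (s * I)) = s * I * π := by
    rw [add_comm, Complex.Gamma_add_one _ hsI, mul_assoc (s * I : ℂ),
      Complex.Gamma_mul_Gamma_one_sub, mul_assoc, div_mul_cancel₀ _ hsin]
  have hconj : ‖Complex.Gamma (1 - s * I)‖ = ‖Complex.Gamma (1 + s * I)‖ := by
    rw [← Complex.norm_conj (Complex.Gamma (1 + s * I)), ← Complex.Gamma_conj]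
    simp [sub_eq_add_neg]
  have hnorm := congrArg norm hreflect
  simp only [hsinh, norm_mul, hconj, norm_I, norm_real, Real.norm_eq_abs, Real.abs_sinh, abs_mul,
    abs_of_pos Real.pi_pos, mul_one] at hnorm
  linarith

theorem one_le_norm_Gamma_one_add_mul_I (s : ℝ) :
    1 ≤ ‖Complex.Gamma (1 + s * I)‖ * rexp (π * |s|) := by
  rcases eq_or_ne s 0 with rfl | hs
  · simp
  set G := ‖Complex.Gamma (1 + s * I)‖
  have hs' : 0 < π * |s| := by positivity
  have hsq : 1 ≤ G ^ 2 * rexp (π * |s|) := by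
    refine le_of_mul_le_mul_left ?_ hs'
    calc π * |s| * 1 = G ^ 2 * Real.sinh (π * |s|) := by
          rw [mul_one, norm_Gamma_one_add_mul_I_sq_mul_sinh hs]
      _ ≤ G ^ 2 * (π * |s| * rexp (π * |s|)) := by gcongr; exact sinh_le_mul_exp _
      _ = π * |s| * (G ^ 2 * rexp (π * |s|)) := by ring
  have hexp : 1 ≤ rexp (π * |s|) := Real.one_le_exp hs'.le
  refine (one_le_sq_iff₀ (by positivity)).1 ?_
  calc 1 ≤ G ^ 2 * rexp (π * |s|) * 1 := by rwa [mul_one]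
    _ ≤ G ^ 2 * rexp (π * |s|) * rexp (π * |s|) := by gcongr
    _ = (G * rexp (π * |s|)) ^ 2 := by ring

end GammaBound

section Plancherel

open scoped FourierTransform SchwartzMap

variable {E F : Type*} [NormedAddCommGroup E] [InnerProductSpace ℝ E] [FiniteDimensional ℝ E]
  [MeasurableSpace E] [BorelSpace E] [NormedAddCommGroup F]

section NormedSpace

variable [NormedSpace ℂ F]

theorem continuous_fourier_of_integrable {f : E → F} (hf : Integrable f) : Continuous (𝓕 f) :=
  VectorFourier.fourierIntegral_continuous Real.continuous_fourierChar
    (by exact continuous_inner) hf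

theorem integral_fourier_smul_eq [CompleteSpace F] {f : E → ℂ} {g : E → F} (hf : Integrable f)
    (hg : Integrable g) : ∫ ξ, 𝓕 f ξ • g ξ = ∫ x, f x • 𝓕 g x := by
  have h := VectorFourier.integral_fourierIntegral_smul_eq_flip (L := innerₗ E)
    Real.continuous_fourierChar (by exact continuous_inner) hf hg
  rwa [flip_innerₗ] at h

end NormedSpace

variable [InnerProductSpace ℂ F] [CompleteSpace F]

theorem fourier_toLp_ae_eq {f : E → F} (hf : Integrable f) (hf₂ : MemLp f 2) :
    (𝓕 (hf₂.toLp f) : Lp F 2 (volume : Measure E)) =ᵐ[volume] 𝓕 f := by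
  refine ae_eq_of_integral_contDiff_smul_eq ((Lp.memLp _).locallyIntegrable one_le_two)
    (continuous_fourier_of_integrable hf).locallyIntegrable fun φ hφ hφc => ?_
  let φc : 𝓢(E, ℂ) := (hφc.comp_left (g := ofReal) ofReal_zero).toSchwartzMap
    (ofRealCLM.contDiff.comp hφ)
  have hweak := congrArg (fun T : 𝓢'(E, F) => T φc)
    (Lp.fourier_toTemperedDistribution_eq (hf₂.toLp f))
  simp only [TemperedDistribution.fourier_apply, Lp.toTemperedDistribution_apply] at hweak
  calc ∫ ξ, φ ξ • (𝓕 (hf₂.toLp f) : Lp F 2 (volume : Measure E)) ξ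
      = ∫ x, 𝓕 φc x • hf₂.toLp f x := hweak.symm
    _ = ∫ x, 𝓕 (φc : E → ℂ) x • f x := by
        refine integral_congr_ae (hf₂.coeFn_toLp.mono fun x hx => ?_)
        simp only [hx, SchwartzMap.fourier_coe]
    _ = ∫ ξ, φc ξ • 𝓕 f ξ := integral_fourier_smul_eq φc.integrable hf
    _ = ∫ ξ, φ ξ • 𝓕 f ξ := rfl

theorem memLp_two_fourier {f : E → F} (hf : Integrable f) (hf₂ : MemLp f 2) : MemLp (𝓕 f) 2 :=
  (Lp.memLp _).ae_eq (fourier_toLp_ae_eq hf hf₂)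

theorem lpNorm_two_fourier {f : E → F} (hf : Integrable f) (hf₂ : MemLp f 2) :
    lpNorm (𝓕 f) 2 volume = lpNorm f 2 volume := by
  have h := Lp.norm_fourier_eq (hf₂.toLp f)
  rwa [Lp.norm_def, Lp.norm_def, eLpNorm_congr_ae (fourier_toLp_ae_eq hf hf₂),
    eLpNorm_congr_ae hf₂.coeFn_toLp, toReal_eLpNorm (memLp_two_fourier hf hf₂).1,
    toReal_eLpNorm hf₂.1] at h

end Plancherel

section KernelForm

variable {α β : Type*} [MeasurableSpace α] [MeasurableSpace β] {μ : Measure α} {ν : Measure β}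
  {k : α × β → ℂ} {f : β → ℂ} {g : α → ℂ}

/-- The bilinear form `∬ k(x, y) f(y) g(x)` of the integral operator with kernel `k`. -/
def kernelForm (μ : Measure α) (ν : Measure β) (k : α × β → ℂ) (f : β → ℂ) (g : α → ℂ) : ℂ :=
  ∫ q, k q * (f q.2 * g q.1) ∂μ.prod ν

theorem kernelForm_const_mul (c : ℂ) :
    kernelForm μ ν (fun q => c * k q) f g = c * kernelForm μ ν k f g := by
  simp only [kernelForm, mul_assoc, integral_const_mul]

theorem integrable_kernel_mul (hk : AEStronglyMeasurable k (μ.prod ν)) {A : ℝ}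
    (hA : ∀ q, ‖k q‖ ≤ A) (hf : Integrable f ν) (hg : Integrable g μ) :
    Integrable (fun q => k q * (f q.2 * g q.1)) (μ.prod ν) := by
  have hfg : Integrable (fun q : α × β => f q.2 * g q.1) (μ.prod ν) := by
    simpa only [mul_comm] using hg.mul_prod hf
  exact hfg.bdd_mul hk (.of_forall hA)

theorem kernelForm_eq_integral [SFinite μ] [SFinite ν]
    (h : Integrable (fun q => k q * (f q.2 * g q.1)) (μ.prod ν)) :
    kernelForm μ ν k f g = ∫ x, g x * ∫ y, f y * k (x, y) ∂ν ∂μ := by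
  simp_rw [kernelForm, integral_prod _ h, ← integral_const_mul]
  congr! 4
  ring

end KernelForm

section Multiplier

open scoped FourierTransform

theorem integral_norm_mul_le_lpNorm_two {α : Type*} [MeasurableSpace α] {μ : Measure α}
    {F G : α → ℂ} (hF : MemLp F 2 μ) (hG : MemLp G 2 μ) :
    ∫ ξ, ‖F ξ * G ξ‖ ∂μ ≤ lpNorm F 2 μ * lpNorm G 2 μ := by
  have h := integral_mul_norm_le_Lp_mul_Lq (f := F) (g := G) (μ := μ) Real.HolderConjugate.two_two
    (by simpa using hF) (by simpa using hG)
  rw [lpNorm_eq_integral_norm_rpow_toReal two_ne_zero ENNReal.ofNat_ne_top hF.1,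
    lpNorm_eq_integral_norm_rpow_toReal two_ne_zero ENNReal.ofNat_ne_top hG.1]
  simpa using h

variable {E : Type*} [NormedAddCommGroup E] [InnerProductSpace ℝ E] [FiniteDimensional ℝ E]
  [MeasurableSpace E] [BorelSpace E] {k m f g : E → ℂ}

theorem integral_prod_mul_cexp_phase_sub (ξ : E) :
    ∫ q : E × E, f q.2 * g q.1 * cexp (phase (q.1 - q.2) ξ) = 𝓕 f ξ * 𝓕 g (-ξ) := by
  rw [Real.fourier_eq', Real.fourier_eq', mul_comm, Measure.volume_eq_prod, ← integral_prod_mul]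
  refine integral_congr_ae (.of_forall fun q => ?_)
  have hsplit : cexp (phase (q.1 - q.2) ξ) =
      cexp (↑(-2 * π * ⟪q.1, -ξ⟫) * I) * cexp (↑(-2 * π * ⟪q.2, ξ⟫) * I) := by
    rw [phase_apply, ← Complex.exp_add, inner_sub_left, inner_neg_right]
    push_cast
    ring_nf
  simp only [hsplit, smul_eq_mul]
  ring

theorem kernelForm_convolution_eq_integral_fourier (hm : Integrable m)
    (hk : ∀ x, k x = ∫ ξ, m ξ * cexp (phase x ξ)) (hf : Integrable f) (hg : Integrable g) :
    kernelForm volume volume (fun q => k (q.1 - q.2)) f g = ∫ ξ, m ξ * (𝓕 f ξ * 𝓕 g (-ξ)) := by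
  have hfg : Integrable fun q : E × E => f q.2 * g q.1 := by
    simpa only [Measure.volume_eq_prod, mul_comm] using hg.mul_prod hf
  have hphase : AEStronglyMeasurable (fun r : (E × E) × E => cexp (phase (r.1.1 - r.1.2) r.2))
      (volume.prod volume) := Continuous.aestronglyMeasurable (by fun_prop)
  calc kernelForm volume volume (fun q => k (q.1 - q.2)) f g
      = ∫ q : E × E, ∫ ξ, f q.2 * g q.1 * m ξ * cexp (phase (q.1 - q.2) ξ) := by
        refine integral_congr_ae (.of_forall fun q => ?_)
        simp only [hk, mul_assoc, ← integral_const_mul, mul_comm _ (f q.2 * g q.1)]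
    _ = ∫ ξ, ∫ q : E × E, f q.2 * g q.1 * m ξ * cexp (phase (q.1 - q.2) ξ) :=
        integral_integral_swap (integrable_mul_cexp_phase (hfg.mul_prod hm) hphase)
    _ = ∫ ξ, m ξ * (𝓕 f ξ * 𝓕 g (-ξ)) := by
        simp only [← integral_prod_mul_cexp_phase_sub, ← integral_const_mul]
        congr! 4
        ring

theorem norm_kernelForm_convolution_le {B : ℝ} (hm : Integrable m) (hB : ∀ ξ, ‖m ξ‖ ≤ B)
    (hk : ∀ x, k x = ∫ ξ, m ξ * cexp (phase x ξ)) (hf : Integrable f) (hf₂ : MemLp f 2)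
    (hg : Integrable g) (hg₂ : MemLp g 2) :
    ‖kernelForm volume volume (fun q => k (q.1 - q.2)) f g‖ ≤
      B * (lpNorm f 2 volume * lpNorm g 2 volume) := by
  have hB₀ : 0 ≤ B := (norm_nonneg _).trans (hB 0)
  have hneg := Measure.measurePreserving_neg (volume : Measure E)
  have hFf := memLp_two_fourier hf hf₂
  have hFg : MemLp (fun ξ => 𝓕 g (-ξ)) 2 :=
    (memLp_two_fourier hg hg₂).comp_measurePreserving hneg
  have hnorm : lpNorm (fun ξ => 𝓕 g (-ξ)) 2 volume = lpNorm g 2 volume := by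
    rw [← lpNorm_two_fourier hg hg₂, ← toReal_eLpNorm hFg.1,
      ← toReal_eLpNorm (memLp_two_fourier hg hg₂).1]
    exact congrArg _ (eLpNorm_comp_measurePreserving (memLp_two_fourier hg hg₂).1 hneg)
  rw [kernelForm_convolution_eq_integral_fourier hm hk hf hg]
  calc ‖∫ ξ, m ξ * (𝓕 f ξ * 𝓕 g (-ξ))‖ ≤ ∫ ξ, B * ‖𝓕 f ξ * 𝓕 g (-ξ)‖ := by
        refine norm_integral_le_of_norm_le ((hFf.integrable_mul hFg).norm.const_mul B)
          (.of_forall fun ξ => ?_)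
        rw [norm_mul]
        gcongr
        exact hB ξ
    _ ≤ B * (lpNorm f 2 volume * lpNorm g 2 volume) := by
        rw [integral_const_mul, ← lpNorm_two_fourier hf hf₂, ← hnorm]
        gcongr
        exact integral_norm_mul_le_lpNorm_two hFf hFg

end Multiplier

section ThreeLines

open HadamardThreeLines

theorem norm_cexp_sq (z : ℂ) : ‖cexp (z ^ 2)‖ = rexp (z.re ^ 2 - z.im ^ 2) := by
  rw [Complex.norm_exp, sq, mul_re, ← sq, ← sq]

theorem bddAbove_norm_cexp_sq_mul {F : ℂ → ℂ}
    (hF : BddAbove ((norm ∘ F) '' verticalClosedStrip 0 1)) :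
    BddAbove ((norm ∘ fun z => cexp (z ^ 2) * F z) '' verticalClosedStrip 0 1) := by
  obtain ⟨B, hB⟩ := hF
  refine ⟨rexp 1 * B, ?_⟩
  rintro _ ⟨z, hz, rfl⟩
  have hre : 0 ≤ z.re ∧ z.re ≤ 1 := by simpa [verticalClosedStrip] using hz
  have hsq : z.re ^ 2 - z.im ^ 2 ≤ 1 := by nlinarith [sq_nonneg z.im]
  simp only [Function.comp_apply, norm_mul, norm_cexp_sq]
  gcongr
  exact hB ⟨z, hz, rfl⟩

-- The factor `exp (z²)` absorbs the exponential growth on the line `re z = 1`.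
theorem norm_le_interp_of_exp_growth {F : ℂ → ℂ} {A₀ A₁ a θ : ℝ}
    (hF : DiffContOnCl ℂ F (verticalStrip 0 1))
    (hbdd : BddAbove ((norm ∘ F) '' verticalClosedStrip 0 1))
    (h₀ : ∀ y : ℝ, ‖F (y * I)‖ ≤ A₀) (h₁ : ∀ y : ℝ, ‖F (1 + y * I)‖ ≤ A₁ * rexp (a * |y|))
    (hθ₀ : 0 ≤ θ) (hθ₁ : θ ≤ 1) :
    ‖F θ‖ ≤ A₀ ^ (1 - θ) * (A₁ * rexp (1 + a ^ 2 / 4)) ^ θ := by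
  have hA₁ : 0 ≤ A₁ := by simpa using (norm_nonneg _).trans (h₁ 0)
  have hleft : ∀ z ∈ re ⁻¹' {0}, ‖cexp (z ^ 2) * F z‖ ≤ A₀ := by
    intro z (hz : z.re = 0)
    have hzF : ‖F z‖ ≤ A₀ := by
      convert h₀ z.im
      exact Complex.ext (by simp [hz]) (by simp)
    rw [norm_mul, norm_cexp_sq, hz]
    refine (mul_le_of_le_one_left (norm_nonneg _) (Real.exp_le_one_iff.2 ?_)).trans hzF
    nlinarith [sq_nonneg z.im]
  have hright : ∀ z ∈ re ⁻¹' {1}, ‖cexp (z ^ 2) * F z‖ ≤ A₁ * rexp (1 + a ^ 2 / 4) := by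
    intro z (hz : z.re = 1)
    have hzF : ‖F z‖ ≤ A₁ * rexp (a * |z.im|) := by
      convert h₁ z.im
      exact Complex.ext (by simp [hz]) (by simp)
    calc ‖cexp (z ^ 2) * F z‖ ≤ rexp (1 - z.im ^ 2) * (A₁ * rexp (a * |z.im|)) := by
          rw [norm_mul, norm_cexp_sq, hz, one_pow]
          gcongr
      _ = A₁ * rexp (1 - z.im ^ 2 + a * |z.im|) := by rw [Real.exp_add]; ring
      _ ≤ A₁ * rexp (1 + a ^ 2 / 4) := by
          refine mul_le_mul_of_nonneg_left (Real.exp_le_exp.2 ?_) hA₁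
          nlinarith [sq_nonneg (|z.im| - a / 2), sq_abs z.im]
  have hmain := norm_le_interp_of_mem_verticalClosedStrip₀₁'
    (f := fun z => cexp (z ^ 2) * F z) (z := (θ : ℂ)) (by simp [verticalClosedStrip, hθ₀, hθ₁])
    ((by fun_prop : Differentiable ℂ fun z : ℂ => cexp (z ^ 2)).diffContOnCl.smul hF)
    (bddAbove_norm_cexp_sq_mul hbdd) hleft hright
  rw [ofReal_re, norm_mul, norm_cexp_sq] at hmain
  refine (le_mul_of_one_le_left (norm_nonneg _) (Real.one_le_exp ?_)).trans hmain
  simp [sq_nonneg]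

end ThreeLines

section ExponentialFamily

open HadamardThreeLines

variable {α : Type*} [MeasurableSpace α] {μ : Measure α} {Φ : α → ℂ} {b : α → ℝ} {M : ℝ}

theorem norm_cexp_mul_ofReal_le {z : ℂ} {t : ℝ} (hM : 0 ≤ M) (ht : t ≤ M) (hz : 0 ≤ z.re)
    {σ : ℝ} (hσ : z.re ≤ σ) : ‖cexp (z * t)‖ ≤ rexp (σ * M) := by
  rw [Complex.norm_exp, re_mul_ofReal]
  refine Real.exp_le_exp.2 ?_
  exact (mul_le_mul_of_nonneg_left ht hz).trans (mul_le_mul_of_nonneg_right hσ hM)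

theorem norm_mul_cexp_le_of_mem_verticalClosedStrip {c z : ℂ} {t : ℝ} (hM : 0 ≤ M) (ht : t ≤ M)
    (hz : z ∈ verticalClosedStrip 0 1) : ‖c * cexp (z * t)‖ ≤ ‖c‖ * rexp M := by
  rw [norm_mul, ← one_mul M]
  gcongr
  exact norm_cexp_mul_ofReal_le hM ht hz.1 hz.2

theorem abs_mul_exp_mul_le {t σ : ℝ} (hM : 0 ≤ M) (ht : t ≤ M) (hσ : 0 < σ) :
    |t| * rexp (σ * t) ≤ (M + σ⁻¹) * rexp (σ * M) := by
  have habs : |t| ≤ M + (M - t) := abs_le.2 ⟨by linarith, by linarith⟩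
  have hdecay : (M - t) * rexp (-(σ * (M - t))) ≤ σ⁻¹ := by
    rw [Real.exp_neg, ← div_eq_mul_inv, div_le_iff₀ (Real.exp_pos _), ← div_eq_inv_mul,
      le_div_iff₀ hσ]
    linarith [Real.add_one_le_exp (σ * (M - t))]
  have hone : rexp (-(σ * (M - t))) ≤ 1 :=
    Real.exp_le_one_iff.2 (neg_nonpos.2 (mul_nonneg hσ.le (sub_nonneg.2 ht)))
  calc |t| * rexp (σ * t) ≤ (M + (M - t)) * rexp (σ * t) := by gcongr
    _ = (M * rexp (-(σ * (M - t))) + (M - t) * rexp (-(σ * (M - t)))) * rexp (σ * M) := by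
        rw [← add_mul, mul_assoc, ← Real.exp_add]
        ring_nf
    _ ≤ (M + σ⁻¹) * rexp (σ * M) := by
        gcongr
        exact mul_le_of_le_one_right hM hone

theorem aestronglyMeasurable_mul_cexp (hΦ : AEStronglyMeasurable Φ μ) (hb : AEMeasurable b μ)
    (z : ℂ) : AEStronglyMeasurable (fun q => Φ q * cexp (z * b q)) μ :=
  hΦ.mul (measurable_exp.comp_aemeasurable
    ((measurable_ofReal.comp_aemeasurable hb).const_mul z)).aestronglyMeasurable

theorem differentiableAt_integral_mul_cexp (hΦ : Integrable Φ μ) (hb : AEMeasurable b μ)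
    (hM : 0 ≤ M) (hbM : ∀ q, b q ≤ M) {z : ℂ} (hz : 0 < z.re) :
    DifferentiableAt ℂ (fun z => ∫ q, Φ q * cexp (z * b q) ∂μ) z := by
  set ε : ℝ := z.re / 2 with hε
  have hmem : ∀ w ∈ ball z ε, ε < w.re ∧ w.re < 3 * ε := by
    intro w hw
    have h := abs_lt.1 ((abs_re_le_norm (w - z)).trans_lt (mem_ball_iff_norm.1 hw))
    rw [sub_re] at h
    constructor <;> linarith
  refine (hasDerivAt_integral_of_dominated_loc_of_deriv_le (μ := μ) (s := ball z ε)
    (F' := fun w q => Φ q * cexp (w * b q) * b q)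
    (bound := fun q => ‖Φ q‖ * ((M + ε⁻¹) * rexp (3 * ε * M)))
    (ball_mem_nhds z (half_pos hz))
    (.of_forall fun w => aestronglyMeasurable_mul_cexp hΦ.1 hb w) ?_
    ((aestronglyMeasurable_mul_cexp hΦ.1 hb z).mul
      (measurable_ofReal.comp_aemeasurable hb).aestronglyMeasurable)
    (.of_forall fun q w hw => ?_) (hΦ.norm.mul_const _)
    (.of_forall fun q w _ => ?_)).2.differentiableAt
  · refine (hΦ.norm.mul_const (rexp (z.re * M))).mono'
      (aestronglyMeasurable_mul_cexp hΦ.1 hb z) (.of_forall fun q => ?_)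
    rw [norm_mul]
    gcongr
    exact norm_cexp_mul_ofReal_le hM (hbM q) hz.le le_rfl
  · obtain ⟨hεw, hw3⟩ := hmem w hw
    have hε₀ : 0 < ε := half_pos hz
    rw [norm_mul, norm_mul, mul_assoc, Complex.norm_exp, re_mul_ofReal, norm_real, Real.norm_eq_abs,
      mul_comm (rexp _)]
    refine mul_le_mul_of_nonneg_left ?_ (norm_nonneg _)
    refine (abs_mul_exp_mul_le hM (hbM q) (hε₀.trans hεw)).trans ?_
    gcongr
  · simpa only [id_eq, one_mul, mul_assoc] using
      (((hasDerivAt_id w).mul_const (b q : ℂ)).cexp).const_mul (Φ q)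

theorem bddAbove_norm_integral_mul_cexp (hΦ : Integrable Φ μ) (hM : 0 ≤ M)
    (hbM : ∀ q, b q ≤ M) :
    BddAbove ((norm ∘ fun z => ∫ q, Φ q * cexp (z * b q) ∂μ) '' verticalClosedStrip 0 1) := by
  refine ⟨∫ q, ‖Φ q‖ * rexp M ∂μ, ?_⟩
  rintro _ ⟨z, hz, rfl⟩
  exact norm_integral_le_of_norm_le (hΦ.norm.mul_const _)
    (.of_forall fun q => norm_mul_cexp_le_of_mem_verticalClosedStrip hM (hbM q) hz)

theorem diffContOnCl_integral_mul_cexp (hΦ : Integrable Φ μ) (hb : AEMeasurable b μ)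
    (hM : 0 ≤ M) (hbM : ∀ q, b q ≤ M) :
    DiffContOnCl ℂ (fun z => ∫ q, Φ q * cexp (z * b q) ∂μ) (verticalStrip 0 1) := by
  refine ⟨fun z hz =>
    (differentiableAt_integral_mul_cexp hΦ hb hM hbM hz.1).differentiableWithinAt, ?_⟩
  have hclosed : IsClosed (verticalClosedStrip 0 1) := isClosed_Icc.preimage continuous_re
  refine ContinuousOn.mono (s := verticalClosedStrip 0 1) ?_
    (closure_minimal (Set.preimage_mono Set.Ioo_subset_Icc_self) hclosed)
  exact continuousOn_of_dominated (bound := fun q => ‖Φ q‖ * rexp M)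
    (fun z _ => aestronglyMeasurable_mul_cexp hΦ.1 hb z)
    (fun z hz => .of_forall fun q =>
      norm_mul_cexp_le_of_mem_verticalClosedStrip hM (hbM q) hz)
    (hΦ.norm.mul_const _) (.of_forall fun q => by fun_prop)

end ExponentialFamily

section PowTwist

variable {α : Type*} {f : α → ℂ}

/-- `f |f|^c`: the function with the modulus `|f|^{1 + Re c}` that depends analytically on `c`. At a
zero of `f` the value is `0`, through the convention `log 0 = 0`. -/
def powTwist (f : α → ℂ) (c : ℂ) (x : α) : ℂ := f x * cexp (c * (Real.log ‖f x‖ : ℝ))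

theorem powTwist_zero (f : α → ℂ) : powTwist f 0 = f := by
  ext x
  simp [powTwist]

theorem powTwist_add (f : α → ℂ) (c d : ℂ) (x : α) :
    powTwist f (c + d) x = powTwist f c x * cexp (d * (Real.log ‖f x‖ : ℝ)) := by
  rw [powTwist, powTwist, mul_assoc, ← Complex.exp_add, add_mul]

theorem norm_powTwist {c : ℂ} {s : ℝ} (hs : 0 < s) (hc : 1 + c.re = s) (x : α) :
    ‖powTwist f c x‖ = ‖f x‖ ^ s := by
  rcases eq_or_ne (f x) 0 with h | h
  · simp [powTwist, h, Real.zero_rpow hs.ne']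
  · have hpos : 0 < ‖f x‖ := norm_pos_iff.2 h
    rw [powTwist, norm_mul, Complex.norm_exp, re_mul_ofReal, ← hc, Real.rpow_add hpos,
      Real.rpow_one, Real.rpow_def_of_pos hpos, mul_comm c.re]

/-- The exponent of the phase-preserving power in the classical proof of Riesz–Thorin: the modulus
of `powTwist f (twistExponent p z)` is `|f|^p` on `Re z = 0` and `|f|^{p/2}` on `Re z = 1`. -/
def twistExponent (p : ℝ) (z : ℂ) : ℂ := (p - 1 : ℝ) + -(z * (p / 2 : ℝ))

theorem one_add_twistExponent_re (p : ℝ) (z : ℂ) :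
    1 + (twistExponent p z).re = p - z.re * (p / 2) := by
  simp only [twistExponent, add_re, neg_re, re_mul_ofReal, ofReal_re]
  ring

theorem twistExponent_eq_zero {p θ : ℝ} (hpθ : p * (1 - θ / 2) = 1) : twistExponent p θ = 0 := by
  rw [twistExponent, ← ofReal_mul, ← ofReal_neg, ← ofReal_add, ofReal_eq_zero]
  linarith

theorem mul_cexp_mul_powTwist_twistExponent {α β : Type*} {k : α × β → ℂ} {L : α × β → ℝ}
    {f : β → ℂ} {g : α → ℂ} (p : ℝ) (z : ℂ) (q : α × β) :
    k q * cexp (z * L q) *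
        (powTwist f (twistExponent p z) q.2 * powTwist g (twistExponent p z) q.1) =
      k q * (powTwist f (p - 1 : ℝ) q.2 * powTwist g (p - 1 : ℝ) q.1) *
        cexp (z * (L q - p / 2 * (Real.log ‖f q.2‖ + Real.log ‖g q.1‖) : ℝ)) := by
  have hsplit : z * (L q - p / 2 * (Real.log ‖f q.2‖ + Real.log ‖g q.1‖) : ℝ) =
      z * L q + (-(z * (p / 2 : ℝ)) * (Real.log ‖f q.2‖ : ℝ) +
        -(z * (p / 2 : ℝ)) * (Real.log ‖g q.1‖ : ℝ)) := by
    push_cast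
    ring
  rw [twistExponent, powTwist_add, powTwist_add, hsplit, Complex.exp_add, Complex.exp_add]
  ring

variable [MeasurableSpace α] {μ : Measure α} {N p : ℝ}

theorem aestronglyMeasurable_powTwist (hf : AEStronglyMeasurable f μ) (c : ℂ) :
    AEStronglyMeasurable (powTwist f c) μ := by
  have hcomp : Measurable fun u : ℂ => u * cexp (c * (Real.log ‖u‖ : ℝ)) := by fun_prop
  exact (hcomp.comp_aemeasurable hf.aemeasurable).aestronglyMeasurable

theorem integrable_powTwist (hf : Integrable f μ) (hN : ∀ x, |Real.log ‖f x‖| ≤ N) (c : ℂ) :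
    Integrable (powTwist f c) μ := by
  refine (hf.norm.mul_const (rexp (|c.re| * N))).mono' (aestronglyMeasurable_powTwist hf.1 c)
    (.of_forall fun x => ?_)
  rw [powTwist, norm_mul, Complex.norm_exp, re_mul_ofReal]
  refine mul_le_mul_of_nonneg_left (Real.exp_le_exp.2 ?_) (norm_nonneg _)
  calc c.re * Real.log ‖f x‖ ≤ |c.re| * |Real.log ‖f x‖| := by
        rw [← abs_mul]
        exact le_abs_self _
    _ ≤ |c.re| * N := by
        gcongr
        exact hN x

theorem integrable_norm_rpow_of_abs_log_le (hf : Integrable f μ)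
    (hN : ∀ x, |Real.log ‖f x‖| ≤ N) (hp : 0 < p) : Integrable (fun x => ‖f x‖ ^ p) μ := by
  refine (integrable_powTwist hf hN (p - 1 : ℝ)).norm.congr (.of_forall fun x => ?_)
  exact norm_powTwist hp (by simp) x

theorem memLp_two_powTwist (hf : Integrable f μ) (hN : ∀ x, |Real.log ‖f x‖| ≤ N) (hp : 0 < p)
    {c : ℂ} (hc : 1 + c.re = p / 2) : MemLp (powTwist f c) 2 μ := by
  rw [memLp_two_iff_integrable_sq_norm (aestronglyMeasurable_powTwist hf.1 c)]
  refine (integrable_norm_rpow_of_abs_log_le hf hN hp).congr (.of_forall fun x => ?_)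
  simp only [norm_powTwist (half_pos hp) hc, ← Real.rpow_mul_natCast (norm_nonneg _)]
  norm_num

theorem lpNorm_two_powTwist (hf : AEStronglyMeasurable f μ) (hp : 0 < p) {c : ℂ}
    (hc : 1 + c.re = p / 2) :
    lpNorm (powTwist f c) 2 μ = (∫ x, ‖f x‖ ^ p ∂μ) ^ (1 / 2 : ℝ) := by
  rw [lpNorm_eq_integral_norm_rpow_toReal two_ne_zero ENNReal.ofNat_ne_top
    (aestronglyMeasurable_powTwist hf c)]
  simp only [norm_powTwist (half_pos hp) hc, ENNReal.toReal_ofNat,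
    ← Real.rpow_mul (norm_nonneg _), div_mul_cancel₀ p two_ne_zero, one_div]

theorem lpNorm_ofReal_eq (hf : AEStronglyMeasurable f μ) (hp : 0 < p) :
    lpNorm f (ENNReal.ofReal p) μ = (∫ x, ‖f x‖ ^ p ∂μ) ^ (1 / p) := by
  rw [lpNorm_eq_integral_norm_rpow_toReal (by simpa using hp) ENNReal.ofReal_ne_top hf,
    ENNReal.toReal_ofReal hp.le, one_div]

end PowTwist

section SteinInterpolation

variable {α β : Type*} [MeasurableSpace α] [MeasurableSpace β] {μ : Measure α} {ν : Measure β}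
  {k : α × β → ℂ} {L : α × β → ℝ} {A₀ A₁ a p θ N : ℝ} {f : β → ℂ} {g : α → ℂ}

/-- Hypotheses of Stein interpolation for the analytic family of kernels `k e^{zL}`, `0 ≤ Re z ≤ 1`:
the kernel is bounded by `A₀` on `Re z = 0`, and on `Re z = 1` it is bounded on `L²` with norm
`A₁ e^{a |Im z|}`. -/
structure IsSteinFamily (μ : Measure α) (ν : Measure β) (k : α × β → ℂ) (L : α × β → ℝ)
    (A₀ A₁ a : ℝ) : Prop where
  aestronglyMeasurable : AEStronglyMeasurable k (μ.prod ν)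
  aemeasurable : AEMeasurable L (μ.prod ν)
  nonpos : ∀ q, L q ≤ 0
  left_nonneg : 0 ≤ A₀
  right_nonneg : 0 ≤ A₁
  norm_le : ∀ q, ‖k q‖ ≤ A₀
  norm_kernelForm_le : ∀ (y : ℝ) {f : β → ℂ} {g : α → ℂ}, Integrable f ν → MemLp f 2 ν →
    Integrable g μ → MemLp g 2 μ →
      ‖kernelForm μ ν (fun q => k q * cexp ((1 + y * I) * L q)) f g‖ ≤
        A₁ * rexp (a * |y|) * (lpNorm f 2 ν * lpNorm g 2 μ)

namespace IsSteinFamily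

theorem norm_kernelForm_powTwist_le_of_re_eq_zero [SFinite μ] [SFinite ν]
    (h : IsSteinFamily μ ν k L A₀ A₁ a) (hp : 0 < p) (hf : Integrable (fun y => ‖f y‖ ^ p) ν)
    (hg : Integrable (fun x => ‖g x‖ ^ p) μ) {z : ℂ} (hz : z.re = 0) :
    ‖kernelForm μ ν (fun q => k q * cexp (z * L q)) (powTwist f (twistExponent p z))
      (powTwist g (twistExponent p z))‖ ≤ A₀ * ((∫ x, ‖g x‖ ^ p ∂μ) * ∫ y, ‖f y‖ ^ p ∂ν) := by
  have hc : 1 + (twistExponent p z).re = p := by rw [one_add_twistExponent_re, hz]; ring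
  rw [← integral_prod_mul, ← integral_const_mul]
  refine norm_integral_le_of_norm_le ((hg.mul_prod hf).const_mul A₀) (.of_forall fun q => ?_)
  rw [norm_mul, norm_mul, norm_mul, norm_powTwist hp hc, norm_powTwist hp hc, Complex.norm_exp,
    re_mul_ofReal, hz, zero_mul, Real.exp_zero, mul_one, mul_comm (‖f q.2‖ ^ p)]
  gcongr
  exact h.norm_le q

theorem norm_kernelForm_powTwist_le_of_re_eq_one (h : IsSteinFamily μ ν k L A₀ A₁ a)
    (hp : 0 < p) (hf : Integrable f ν) (hfN : ∀ y, |Real.log ‖f y‖| ≤ N)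
    (hg : Integrable g μ) (hgN : ∀ x, |Real.log ‖g x‖| ≤ N) (y : ℝ) :
    ‖kernelForm μ ν (fun q => k q * cexp ((1 + y * I) * L q))
      (powTwist f (twistExponent p (1 + y * I))) (powTwist g (twistExponent p (1 + y * I)))‖ ≤
      A₁ * ((∫ x, ‖g x‖ ^ p ∂μ) * ∫ y, ‖f y‖ ^ p ∂ν) ^ (1 / 2 : ℝ) * rexp (a * |y|) := by
  have hc : 1 + (twistExponent p (1 + y * I)).re = p / 2 := by
    rw [one_add_twistExponent_re]
    simp only [add_re, one_re, mul_re, I_re, I_im, ofReal_re, ofReal_im]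
    ring
  have hX : 0 ≤ ∫ x, ‖g x‖ ^ p ∂μ := integral_nonneg fun x => by positivity
  have hY : 0 ≤ ∫ y, ‖f y‖ ^ p ∂ν := integral_nonneg fun y => by positivity
  refine (h.norm_kernelForm_le y (integrable_powTwist hf hfN _)
    (memLp_two_powTwist hf hfN hp hc) (integrable_powTwist hg hgN _)
    (memLp_two_powTwist hg hgN hp hc)).trans_eq ?_
  rw [lpNorm_two_powTwist hf.1 hp hc, lpNorm_two_powTwist hg.1 hp hc, Real.mul_rpow hX hY]
  ring

theorem norm_kernelForm_le_rpow [SFinite μ] [SFinite ν] (h : IsSteinFamily μ ν k L A₀ A₁ a)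
    (hp : 0 < p) (hθ₀ : 0 ≤ θ) (hθ₁ : θ ≤ 1) (hpθ : p * (1 - θ / 2) = 1) (hf : Integrable f ν)
    (hfN : ∀ y, |Real.log ‖f y‖| ≤ N) (hg : Integrable g μ) (hgN : ∀ x, |Real.log ‖g x‖| ≤ N)
    (hN : 0 ≤ N) :
    ‖kernelForm μ ν (fun q => k q * cexp (θ * L q)) f g‖ ≤
      (A₀ * ((∫ x, ‖g x‖ ^ p ∂μ) * ∫ y, ‖f y‖ ^ p ∂ν)) ^ (1 - θ) *
        (A₁ * ((∫ x, ‖g x‖ ^ p ∂μ) * ∫ y, ‖f y‖ ^ p ∂ν) ^ (1 / 2 : ℝ) *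
          rexp (1 + a ^ 2 / 4)) ^ θ := by
  set Φ : α × β → ℂ := fun q => k q * (powTwist f (p - 1 : ℝ) q.2 * powTwist g (p - 1 : ℝ) q.1)
  set b : α × β → ℝ := fun q => L q - p / 2 * (Real.log ‖f q.2‖ + Real.log ‖g q.1‖)
  have hΦ : Integrable Φ (μ.prod ν) := integrable_kernel_mul h.aestronglyMeasurable h.norm_le
    (integrable_powTwist hf hfN _) (integrable_powTwist hg hgN _)
  have hb : AEMeasurable b (μ.prod ν) := h.aemeasurable.sub
    ((hf.1.comp_snd.norm.aemeasurable.log.add hg.1.comp_fst.norm.aemeasurable.log).const_mul _)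
  have hbM : ∀ q, b q ≤ p * N := by
    intro q
    have hfg : -(N + N) ≤ Real.log ‖f q.2‖ + Real.log ‖g q.1‖ := by
      linarith [(abs_le.1 (hfN q.2)).1, (abs_le.1 (hgN q.1)).1]
    simp only [b]
    linarith [h.nonpos q, mul_le_mul_of_nonneg_left hfg (half_pos hp).le]
  have hF : ∀ z : ℂ, kernelForm μ ν (fun q => k q * cexp (z * L q))
      (powTwist f (twistExponent p z)) (powTwist g (twistExponent p z)) =
        ∫ q, Φ q * cexp (z * b q) ∂μ.prod ν := fun z =>
    integral_congr_ae (.of_forall (mul_cexp_mul_powTwist_twistExponent p z))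
  have hM : 0 ≤ p * N := by positivity
  have hleft := fun y : ℝ => h.norm_kernelForm_powTwist_le_of_re_eq_zero (z := y * I) hp
    (integrable_norm_rpow_of_abs_log_le hf hfN hp)
    (integrable_norm_rpow_of_abs_log_le hg hgN hp) (by simp)
  have hright := h.norm_kernelForm_powTwist_le_of_re_eq_one hp hf hfN hg hgN
  simp only [hF] at hleft hright
  have hinterp := norm_le_interp_of_exp_growth (diffContOnCl_integral_mul_cexp hΦ hb hM hbM)
    (bddAbove_norm_integral_mul_cexp hΦ hM hbM) hleft hright hθ₀ hθ₁
  rwa [← hF, twistExponent_eq_zero hpθ, powTwist_zero, powTwist_zero] at hinterp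

theorem norm_kernelForm_le_of_abs_log_le [SFinite μ] [SFinite ν]
    (h : IsSteinFamily μ ν k L A₀ A₁ a) (hp : 0 < p) (hθ₀ : 0 ≤ θ) (hθ₁ : θ ≤ 1)
    (hpθ : p * (1 - θ / 2) = 1) (hf : Integrable f ν) (hfN : ∀ y, |Real.log ‖f y‖| ≤ N)
    (hg : Integrable g μ) (hgN : ∀ x, |Real.log ‖g x‖| ≤ N) (hN : 0 ≤ N) :
    ‖kernelForm μ ν (fun q => k q * cexp (θ * L q)) f g‖ ≤
      A₀ ^ (1 - θ) * (A₁ * rexp (1 + a ^ 2 / 4)) ^ θ *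
        (lpNorm f (ENNReal.ofReal p) ν * lpNorm g (ENNReal.ofReal p) μ) := by
  refine (h.norm_kernelForm_le_rpow hp hθ₀ hθ₁ hpθ hf hfN hg hgN hN).trans_eq ?_
  have hX : 0 ≤ ∫ x, ‖g x‖ ^ p ∂μ := integral_nonneg fun x => by positivity
  have hY : 0 ≤ ∫ y, ‖f y‖ ^ p ∂ν := integral_nonneg fun y => by positivity
  have hp_inv : 1 / p = 1 - θ + 1 / 2 * θ := by
    rw [div_eq_iff hp.ne']
    linarith
  have hXY := mul_nonneg hX hY
  have hA₁ := h.right_nonneg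
  rw [lpNorm_ofReal_eq hf.1 hp, lpNorm_ofReal_eq hg.1 hp, mul_comm ((∫ y, ‖f y‖ ^ p ∂ν) ^ _),
    ← Real.mul_rpow hX hY, hp_inv, Real.rpow_add_of_nonneg hXY (by linarith) (by positivity),
    Real.rpow_mul hXY, mul_right_comm A₁, Real.mul_rpow h.left_nonneg hXY,
    Real.mul_rpow (mul_nonneg hA₁ (Real.exp_pos _).le) (Real.rpow_nonneg hXY _)]
  ring

end IsSteinFamily

end SteinInterpolation

section Truncation

/-- Truncation of a complex number to `e^{-N} ≤ |u| ≤ e^N`, the range in which the powers of the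
modulus used in the interpolation argument are bounded. -/
def logTruncation (N : ℝ) (u : ℂ) : ℂ := if |Real.log ‖u‖| ≤ N then u else 0

theorem measurable_logTruncation (N : ℝ) : Measurable (logTruncation N) :=
  Measurable.ite (measurableSet_le (by fun_prop) measurable_const) measurable_id measurable_const

theorem norm_logTruncation_le (N : ℝ) (u : ℂ) : ‖logTruncation N u‖ ≤ ‖u‖ := by
  rw [logTruncation]
  split_ifs <;> simp

theorem abs_log_norm_logTruncation_le {N : ℝ} (hN : 0 ≤ N) (u : ℂ) :
    |Real.log ‖logTruncation N u‖| ≤ N := by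
  rw [logTruncation]
  split_ifs with h
  · exact h
  · simpa using hN

theorem tendsto_logTruncation (u : ℂ) :
    Filter.Tendsto (fun N : ℕ => logTruncation N u) .atTop (nhds u) := by
  refine tendsto_const_nhds.congr' ?_
  filter_upwards [Filter.eventually_ge_atTop ⌈|Real.log ‖u‖|⌉₊] with N hN
  rw [logTruncation, if_pos (Nat.ceil_le.1 hN)]

variable {α β : Type*} [MeasurableSpace α] [MeasurableSpace β] {μ : Measure α} {ν : Measure β}

theorem integrable_logTruncation {f : α → ℂ} (hf : Integrable f μ) (N : ℝ) :
    Integrable (fun x => logTruncation N (f x)) μ :=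
  hf.mono ((measurable_logTruncation N).comp_aemeasurable hf.1.aemeasurable).aestronglyMeasurable
    (.of_forall fun x => norm_logTruncation_le N (f x))

theorem lpNorm_logTruncation_le {f : α → ℂ} {p : ℝ≥0∞} (hf : MemLp f p μ) (N : ℝ) :
    lpNorm (fun x => logTruncation N (f x)) p μ ≤ lpNorm f p μ := by
  have hmeas : AEStronglyMeasurable (fun x => logTruncation N (f x)) μ :=
    ((measurable_logTruncation N).comp_aemeasurable hf.1.aemeasurable).aestronglyMeasurable
  rw [← toReal_eLpNorm hf.1, ← toReal_eLpNorm hmeas]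
  exact ENNReal.toReal_mono hf.2.ne (eLpNorm_mono fun x => norm_logTruncation_le N (f x))

theorem tendsto_kernelForm_logTruncation {k : α × β → ℂ} {f : β → ℂ} {g : α → ℂ} {A : ℝ}
    (hk : AEStronglyMeasurable k (μ.prod ν)) (hA : ∀ q, ‖k q‖ ≤ A) (hf : Integrable f ν)
    (hg : Integrable g μ) :
    Filter.Tendsto (fun N : ℕ => kernelForm μ ν k (fun y => logTruncation N (f y))
      (fun x => logTruncation N (g x))) .atTop (nhds (kernelForm μ ν k f g)) := by
  refine tendsto_integral_of_dominated_convergence _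
    (fun N => (integrable_kernel_mul hk hA (integrable_logTruncation hf N)
      (integrable_logTruncation hg N)).1)
    (integrable_kernel_mul hk hA hf hg).norm (fun N => .of_forall fun q => ?_)
    (.of_forall fun q =>
      ((tendsto_logTruncation _).mul (tendsto_logTruncation _)).const_mul (k q))
  simp only [norm_mul]
  gcongr <;> exact norm_logTruncation_le _ _

theorem IsSteinFamily.norm_kernelForm_le_of_memLp [SFinite μ] [SFinite ν] {k : α × β → ℂ}
    {L : α × β → ℝ} {A₀ A₁ a p θ : ℝ} {f : β → ℂ} {g : α → ℂ} (h : IsSteinFamily μ ν k L A₀ A₁ a)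
    (hp : 0 < p) (hθ₀ : 0 ≤ θ) (hθ₁ : θ ≤ 1) (hpθ : p * (1 - θ / 2) = 1) (hf : Integrable f ν)
    (hfp : MemLp f (ENNReal.ofReal p) ν) (hg : Integrable g μ)
    (hgp : MemLp g (ENNReal.ofReal p) μ) :
    ‖kernelForm μ ν (fun q => k q * cexp (θ * L q)) f g‖ ≤
      A₀ ^ (1 - θ) * (A₁ * rexp (1 + a ^ 2 / 4)) ^ θ *
        (lpNorm f (ENNReal.ofReal p) ν * lpNorm g (ENNReal.ofReal p) μ) := by
  have hA₀ := h.left_nonneg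
  have hA₁ := h.right_nonneg
  have hk := aestronglyMeasurable_mul_cexp h.aestronglyMeasurable h.aemeasurable θ
  have hkA : ∀ q, ‖k q * cexp (θ * L q)‖ ≤ A₀ := fun q => by
    rw [norm_mul, Complex.norm_exp, re_mul_ofReal, ofReal_re]
    exact (mul_le_of_le_one_right (norm_nonneg _) (Real.exp_le_one_iff.2
      (mul_nonpos_of_nonneg_of_nonpos hθ₀ (h.nonpos q)))).trans (h.norm_le q)
  refine le_of_tendsto (tendsto_kernelForm_logTruncation hk hkA hf hg).norm (.of_forall fun N => ?_)
  refine (h.norm_kernelForm_le_of_abs_log_le hp hθ₀ hθ₁ hpθ (integrable_logTruncation hf N)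
    (fun y => abs_log_norm_logTruncation_le N.cast_nonneg (f y)) (integrable_logTruncation hg N)
    (fun x => abs_log_norm_logTruncation_le N.cast_nonneg (g x)) N.cast_nonneg).trans ?_
  gcongr
  exacts [lpNorm_nonneg, lpNorm_nonneg, lpNorm_logTruncation_le hfp N,
    lpNorm_logTruncation_le hgp N]

end Truncation

section ConverseHolder

/-- The pointwise extremiser in Hölder's inequality: the number `v` with `v u = |u|^r` and
`|v| = |u|^{r-1}`. -/
def holderDual (r : ℝ) (u : ℂ) : ℂ := (starRingEnd ℂ) u * (‖u‖ ^ (r - 2) : ℝ)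

theorem measurable_holderDual (r : ℝ) : Measurable (holderDual r) := by
  have hconj : Measurable (starRingEnd ℂ : ℂ → ℂ) := continuous_conj.measurable
  unfold holderDual
  fun_prop

theorem norm_holderDual {r : ℝ} (hr : 1 < r) (u : ℂ) : ‖holderDual r u‖ = ‖u‖ ^ (r - 1) := by
  rcases eq_or_ne u 0 with rfl | hu
  · simp [holderDual, Real.zero_rpow (sub_pos.2 hr).ne']
  · rw [holderDual, norm_mul, RCLike.norm_conj, norm_real, Real.norm_of_nonneg (by positivity),
      ← Real.rpow_one_add' (norm_nonneg u) (by linarith)]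
    ring_nf

theorem holderDual_mul_self {r : ℝ} (hr : 0 < r) (u : ℂ) :
    holderDual r u * u = (‖u‖ ^ r : ℝ) := by
  rcases eq_or_ne u 0 with rfl | hu
  · simp [holderDual, Real.zero_rpow hr.ne']
  · have hpos : 0 < ‖u‖ := norm_pos_iff.2 hu
    rw [holderDual, mul_right_comm, conj_mul', ← ofReal_pow, ← ofReal_mul, ← Real.rpow_natCast,
      ← Real.rpow_add hpos]
    norm_num

variable {α : Type*} [MeasurableSpace α] {μ : Measure α} {h : α → ℂ} {p r A : ℝ}

theorem lpNorm_le_of_norm_integral_holderDual_mul_le (hpr : p.HolderConjugate r) (hA : 0 ≤ A)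
    (hh : AEStronglyMeasurable h μ)
    (hle : ‖∫ x, holderDual r (h x) * h x ∂μ‖ ≤
      A * lpNorm (fun x => holderDual r (h x)) (ENNReal.ofReal p) μ) :
    lpNorm h (ENNReal.ofReal r) μ ≤ A := by
  have hr : 1 < r := hpr.symm.lt
  have hdual : ∀ x, ‖holderDual r (h x)‖ ^ p = ‖h x‖ ^ r := fun x => by
    rw [norm_holderDual hr, ← Real.rpow_mul (norm_nonneg _), hpr.symm.sub_one_mul_conj]
  have hmeas : AEStronglyMeasurable (fun x => holderDual r (h x)) μ :=
    ((measurable_holderDual r).comp_aemeasurable hh.aemeasurable).aestronglyMeasurable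
  rw [lpNorm_ofReal_eq hmeas hpr.pos] at hle
  simp only [hdual, holderDual_mul_self hpr.symm.pos] at hle
  rw [integral_complex_ofReal, norm_real] at hle
  rw [lpNorm_ofReal_eq hh hpr.symm.pos]
  set Z := ∫ x, ‖h x‖ ^ r ∂μ
  have hZ : 0 ≤ Z := integral_nonneg fun x => by positivity
  rw [Real.norm_of_nonneg hZ] at hle
  rcases hZ.eq_or_lt with hZ₀ | hZ₀
  · rw [← hZ₀, Real.zero_rpow (by simpa using hpr.symm.ne_zero)]
    exact hA
  · have hexp : 1 / r = 1 - 1 / p := by simpa using hpr.one_sub_inv.symm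
    rwa [hexp, Real.rpow_sub hZ₀, Real.rpow_one, div_le_iff₀ (by positivity)]

theorem memLp_indicator_of_norm_le {S : Set α} {M : ℝ} (hS : MeasurableSet S) (hμS : μ S < ⊤)
    (hh : AEStronglyMeasurable h μ) (hM : ∀ x ∈ S, ‖h x‖ ≤ M) (q : ℝ≥0∞) :
    MemLp (S.indicator h) q μ := by
  have : IsFiniteMeasure (μ.restrict S) := isFiniteMeasure_restrict.2 hμS.ne
  rw [memLp_indicator_iff_restrict hS]
  exact MemLp.of_bound hh.restrict M (ae_restrict_of_forall_mem hS hM)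

theorem eLpNorm_indicator_le_of_norm_integral_mul_le (hpr : p.HolderConjugate r) (hA : 0 ≤ A)
    (hh : Measurable h)
    (hle : ∀ g : α → ℂ, Integrable g μ → MemLp g (ENNReal.ofReal p) μ →
      ‖∫ x, g x * h x ∂μ‖ ≤ A * lpNorm g (ENNReal.ofReal p) μ)
    {S : Set α} {M : ℝ} (hS : MeasurableSet S) (hμS : μ S < ⊤) (hM : ∀ x ∈ S, ‖h x‖ ≤ M) :
    eLpNorm (S.indicator h) (ENNReal.ofReal r) μ ≤ ENNReal.ofReal A := by
  have hcomp : (fun x => holderDual r (S.indicator h x)) = S.indicator (holderDual r ∘ h) :=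
    (Set.indicator_comp_of_zero (g := holderDual r) (by simp [holderDual])).symm
  have hdual : ∀ q, MemLp (fun x => holderDual r (S.indicator h x)) q μ := by
    rw [hcomp]
    refine memLp_indicator_of_norm_le (M := M ^ (r - 1)) hS hμS
      ((measurable_holderDual r).comp hh).aestronglyMeasurable fun x hx => ?_
    rw [Function.comp_apply, norm_holderDual hpr.symm.lt]
    exact Real.rpow_le_rpow (norm_nonneg _) (hM x hx) hpr.symm.sub_one_pos.le
  have hprod : ∀ x, holderDual r (S.indicator h x) * S.indicator h x =
      holderDual r (S.indicator h x) * h x := fun x => by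
    by_cases hx : x ∈ S <;> simp [hx, holderDual]
  have hmem := memLp_indicator_of_norm_le hS hμS hh.aestronglyMeasurable hM (ENNReal.ofReal r)
  have hnorm := lpNorm_le_of_norm_integral_holderDual_mul_le hpr hA hmem.1 (by
    simpa only [hprod] using hle _ (memLp_one_iff_integrable.1 (hdual 1)) (hdual _))
  rwa [← toReal_eLpNorm hmem.1, ← ENNReal.le_ofReal_iff_toReal_le hmem.2.ne hA] at hnorm

theorem eLpNorm_le_of_norm_integral_mul_le [SigmaFinite μ] (hpr : p.HolderConjugate r)
    (hA : 0 ≤ A) (hh : Measurable h)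
    (hle : ∀ g : α → ℂ, Integrable g μ → MemLp g (ENNReal.ofReal p) μ →
      ‖∫ x, g x * h x ∂μ‖ ≤ A * lpNorm g (ENNReal.ofReal p) μ) :
    eLpNorm h (ENNReal.ofReal r) μ ≤ ENNReal.ofReal A := by
  set S : ℕ → Set α := fun k => spanningSets μ k ∩ {x | ‖h x‖ ≤ k}
  have hS : ∀ k, MeasurableSet (S k) := fun k =>
    (measurableSet_spanningSets μ k).inter (measurableSet_le hh.norm measurable_const)
  have hlim : ∀ x, Filter.Tendsto (fun k => (S k).indicator h x) .atTop (nhds (h x)) := by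
    refine fun x => tendsto_const_nhds.congr' ?_
    filter_upwards [Filter.eventually_ge_atTop (spanningSetsIndex μ x),
      Filter.eventually_ge_atTop ⌈‖h x‖⌉₊] with k hk hhk
    have hx : x ∈ S k := ⟨monotone_spanningSets μ hk (mem_spanningSetsIndex μ x), Nat.ceil_le.1 hhk⟩
    rw [Set.indicator_of_mem hx]
  refine (Lp.eLpNorm_lim_le_liminf_eLpNorm (f := fun k => (S k).indicator h)
    (fun k => (hh.indicator (hS k)).aestronglyMeasurable) h (.of_forall hlim)).trans ?_
  refine Filter.liminf_le_of_frequently_le' (.of_forall fun k => ?_)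
  exact eLpNorm_indicator_le_of_norm_integral_mul_le hpr hA hh hle (hS k)
    ((measure_mono Set.inter_subset_left).trans_lt (measure_spanningSets_lt_top μ k))
    fun x hx => hx.2

end ConverseHolder

section Convolution

variable {E : Type*} [NormedAddCommGroup E] [InnerProductSpace ℝ E] [FiniteDimensional ℝ E]
  [MeasurableSpace E] [BorelSpace E]

theorem exists_norm_kernelForm_eulerKernel_mul_cpow_le (hn : 3 ≤ Module.finrank ℝ E) :
    ∃ B : ℝ, 0 ≤ B ∧ ∀ (s : ℝ) {f g : E → ℂ}, Integrable f → MemLp f 2 → Integrable g →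
      MemLp g 2 →
        ‖kernelForm volume volume (fun q : E × E => eulerKernel (q.1 - q.2) *
          ((1 + ‖q.1 - q.2‖ ^ 2 : ℝ) : ℂ) ^ (-(1 + s * I))) f g‖ ≤
        B * rexp (π * |s|) * (lpNorm f 2 volume * lpNorm g 2 volume) := by
  obtain ⟨B, hB₀, hB⟩ := exists_norm_subordinationMultiplier_le hn
  refine ⟨B, hB₀, fun s f g hf hf₂ hg hg₂ => ?_⟩
  have hre : (1 + s * I : ℂ).re = 1 := by simp
  have hw : 1 / 2 < (1 + s * I : ℂ).re := by rw [hre]; norm_num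
  have hform := norm_kernelForm_convolution_le (integrable_subordinationMultiplier hw)
    (hB _ hre) (Gamma_mul_eulerKernel_mul_cpow hw) hf hf₂ hg hg₂
  rw [kernelForm_const_mul, norm_mul] at hform
  set T := ‖kernelForm volume volume (fun q : E × E => eulerKernel (q.1 - q.2) *
    ((1 + ‖q.1 - q.2‖ ^ 2 : ℝ) : ℂ) ^ (-(1 + s * I))) f g‖
  calc T ≤ ‖Complex.Gamma (1 + s * I)‖ * rexp (π * |s|) * T :=
        le_mul_of_one_le_left (norm_nonneg _) (one_le_norm_Gamma_one_add_mul_I s)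
    _ = ‖Complex.Gamma (1 + s * I)‖ * T * rexp (π * |s|) := mul_right_comm _ _ _
    _ ≤ B * (lpNorm f 2 volume * lpNorm g 2 volume) * rexp (π * |s|) := by gcongr
    _ = B * rexp (π * |s|) * (lpNorm f 2 volume * lpNorm g 2 volume) := mul_right_comm _ _ _

theorem rpow_mul_cexp_mul_log {r : ℝ} (hr : 0 < r) (κ : ℝ) (z : ℂ) :
    ((r ^ κ : ℝ) : ℂ) * cexp (z * (-((κ + 1) * Real.log r) : ℝ)) =
      (r : ℂ) ^ (κ - z * (κ + 1)) := by
  have hr' : (r : ℂ) ≠ 0 := ofReal_ne_zero.2 hr.ne'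
  rw [ofReal_cpow hr.le, cpow_def_of_ne_zero hr', cpow_def_of_ne_zero hr', ← Complex.exp_add,
    ← ofReal_log hr.le]
  push_cast
  ring_nf

theorem exists_isSteinFamily_eulerKernel (hn : 3 ≤ Module.finrank ℝ E) {κ : ℝ}
    (hκ : κ = ((Module.finrank ℝ E : ℝ) - 3) / 4) :
    ∃ A₀ A₁ a : ℝ, IsSteinFamily volume volume
      (fun q : E × E => eulerKernel (q.1 - q.2) * ((1 + ‖q.1 - q.2‖ ^ 2) ^ κ : ℝ))
      (fun q => -((κ + 1) * Real.log (1 + ‖q.1 - q.2‖ ^ 2))) A₀ A₁ a := by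
  obtain ⟨A₀, hA₀⟩ := exists_norm_eulerKernel_mul_rpow_le (E := E) (by lia)
  obtain ⟨B, hB₀, hB⟩ := exists_norm_kernelForm_eulerKernel_mul_cpow_le hn
  have hd : (3 : ℝ) ≤ Module.finrank ℝ E := by exact_mod_cast hn
  have hκ₀ : 0 ≤ κ + 1 := by linarith
  have hweight : Continuous fun q : E × E => (1 + ‖q.1 - q.2‖ ^ 2) ^ κ :=
    Continuous.rpow_const (by fun_prop) fun q => .inl (by positivity)
  refine ⟨A₀, B, π * (κ + 1), ?_, by fun_prop, fun q => ?_, ?_, hB₀, fun q => ?_, ?_⟩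
  · exact ((continuous_eulerKernel.comp (by fun_prop)).mul
      (continuous_ofReal.comp hweight)).aestronglyMeasurable
  · exact neg_nonpos.2 (mul_nonneg hκ₀ (Real.log_nonneg (by linarith [sq_nonneg ‖q.1 - q.2‖])))
  · exact (by positivity : (0 : ℝ) ≤ _).trans (hA₀ 0)
  · rw [norm_mul, norm_real, Real.norm_of_nonneg (by positivity), hκ]
    exact hA₀ _
  · intro y f g hf hf₂ hg hg₂
    have hline : (κ : ℂ) - (1 + y * I) * (κ + 1) = -(1 + ((κ + 1) * y : ℝ) * I) := by
      push_cast
      ring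
    have hpos (q : E × E) : 0 < 1 + ‖q.1 - q.2‖ ^ 2 := by positivity
    simp only [mul_assoc (eulerKernel _), rpow_mul_cexp_mul_log (hpos _), hline]
    rw [mul_assoc π, ← abs_of_nonneg hκ₀, ← abs_mul, abs_of_nonneg hκ₀]
    exact hB _ hf hf₂ hg hg₂

theorem exists_norm_kernelForm_eulerKernel_le (hn : 3 ≤ Module.finrank ℝ E) {p : ℝ}
    (hp : p = (2 * (Module.finrank ℝ E : ℝ) + 2) / (Module.finrank ℝ E + 5)) :
    ∃ C : ℝ, 0 ≤ C ∧ ∀ {f g : E → ℂ}, Integrable f → MemLp f (ENNReal.ofReal p) → Integrable g →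
      MemLp g (ENNReal.ofReal p) →
        ‖kernelForm volume volume (fun q : E × E => eulerKernel (q.1 - q.2)) f g‖ ≤
          C * (lpNorm f (ENNReal.ofReal p) volume * lpNorm g (ENNReal.ofReal p) volume) := by
  obtain ⟨A₀, A₁, a, h⟩ := exists_isSteinFamily_eulerKernel hn rfl
  have hA₀ := h.left_nonneg
  have hA₁ := h.right_nonneg
  have hd : (3 : ℝ) ≤ Module.finrank ℝ E := by exact_mod_cast hn
  set d := (Module.finrank ℝ E : ℝ)
  set κ := (d - 3) / 4 with hκ
  set θ := (d - 3) / (d + 1) with hθ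
  have hθ₀ : 0 ≤ θ := div_nonneg (by linarith) (by linarith)
  have hθ₁ : θ ≤ 1 := (div_le_one (by linarith)).2 (by linarith)
  have hpθ : p * (1 - θ / 2) = 1 := by
    rw [hp, hθ]
    field_simp
    ring
  have hκθ : κ - θ * (κ + 1) = 0 := by
    rw [hκ, hθ]
    field_simp
    ring
  have hpos (q : E × E) : 0 < 1 + ‖q.1 - q.2‖ ^ 2 := by positivity
  refine ⟨_, by positivity, fun hf hfp hg hgp => (le_of_eq ?_).trans
    (h.norm_kernelForm_le_of_memLp (by rw [hp]; positivity) hθ₀ hθ₁ hpθ hf hfp hg hgp)⟩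
  have hκθ' : (κ : ℂ) - θ * (κ + 1) = 0 := by exact_mod_cast hκθ
  simp only [mul_assoc (eulerKernel _), rpow_mul_cexp_mul_log (hpos _), hκθ', cpow_zero, mul_one]

theorem exists_norm_eulerKernel_le (hn : 3 ≤ Module.finrank ℝ E) :
    ∃ C : ℝ, 0 ≤ C ∧ ∀ x : E, ‖eulerKernel x‖ ≤ C := by
  obtain ⟨C, hC⟩ := exists_norm_eulerKernel_mul_rpow_le (E := E) (by lia)
  have hd : (3 : ℝ) ≤ Module.finrank ℝ E := by exact_mod_cast hn
  have hle (x : E) : ‖eulerKernel x‖ ≤ C :=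
    (le_mul_of_one_le_right (norm_nonneg _) (Real.one_le_rpow
      (by linarith [sq_nonneg ‖x‖]) (by linarith))).trans (hC x)
  exact ⟨C, (norm_nonneg _).trans (hle 0), hle⟩

theorem continuous_convolution_of_norm_le {f k : E → ℂ} {C : ℝ} (hf : Integrable f)
    (hk : Continuous k) (hC : ∀ x, ‖k x‖ ≤ C) : Continuous fun x => ∫ y, f y * k (x - y) :=
  BddAbove.continuous_convolution_right_of_integrable (ContinuousLinearMap.mul ℝ ℂ)
    ⟨C, Set.forall_mem_range.2 hC⟩ hf hk

theorem eLpNorm_top_convolution_le {f k : E → ℂ} {C : ℝ} (hf : Integrable f)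
    (hC : ∀ x, ‖k x‖ ≤ C) :
    eLpNorm (fun x => ∫ y, f y * k (x - y)) ⊤ volume ≤ ENNReal.ofReal (C * ∫ y, ‖f y‖) := by
  rw [eLpNorm_exponent_top]
  refine eLpNormEssSup_le_of_ae_bound (.of_forall fun x => ?_)
  rw [← integral_const_mul]
  refine norm_integral_le_of_norm_le (hf.norm.const_mul C) (.of_forall fun y => ?_)
  rw [norm_mul, mul_comm]
  gcongr
  exact hC _

theorem exists_eLpNorm_convolution_eulerKernel_le_of_holderConjugate
    (hn : 3 ≤ Module.finrank ℝ E) {p r : ℝ}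
    (hp : p = (2 * (Module.finrank ℝ E : ℝ) + 2) / (Module.finrank ℝ E + 5))
    (hpr : p.HolderConjugate r) :
    ∃ C : ℝ, 0 ≤ C ∧ ∀ {f : E → ℂ}, Integrable f → MemLp f (ENNReal.ofReal p) →
      eLpNorm (fun x => ∫ y, f y * eulerKernel (x - y)) (ENNReal.ofReal r) volume ≤
        ENNReal.ofReal (C * lpNorm f (ENNReal.ofReal p) volume) := by
  obtain ⟨M, -, hM⟩ := exists_norm_eulerKernel_le hn
  obtain ⟨C, hC₀, hC⟩ := exists_norm_kernelForm_eulerKernel_le hn hp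
  refine ⟨C, hC₀, fun {f} hf hfp => eLpNorm_le_of_norm_integral_mul_le hpr
    (mul_nonneg hC₀ lpNorm_nonneg)
    (continuous_convolution_of_norm_le hf continuous_eulerKernel hM).measurable
    fun g hg hgp => ?_⟩
  have hk : AEStronglyMeasurable (fun q : E × E => eulerKernel (q.1 - q.2))
      (volume.prod volume) := (continuous_eulerKernel.comp (by fun_prop)).aestronglyMeasurable
  rw [← kernelForm_eq_integral (integrable_kernel_mul hk (fun q => hM _) hf hg), mul_assoc]
  exact hC hf hfp hg hgp

theorem holderConjugate_endpoint {d : ℝ} (hd : 3 < d) :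
    ((2 * d + 2) / (d + 5)).HolderConjugate ((2 * d + 2) / (d - 3)) := by
  refine Real.holderConjugate_iff.2 ⟨(one_lt_div (by linarith)).2 (by linarith), ?_⟩
  rw [inv_div, inv_div, ← add_div, div_eq_one_iff_eq (by linarith)]
  ring

theorem exists_eLpNorm_convolution_eulerKernel_le {d : ℕ} (hfin : Module.finrank ℝ E = d)
    (hd : 3 ≤ d) :
    ∃ C : ℝ, 0 ≤ C ∧ ∀ {f : E → ℂ}, Integrable f →
      MemLp f (ENNReal.ofReal ((2 * d + 2) / (d + 5))) →
        eLpNorm (fun x => ∫ y, f y * eulerKernel (x - y))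
          (if d = 3 then ⊤ else ENNReal.ofReal ((2 * d + 2) / (d - 3))) volume ≤
        ENNReal.ofReal (C * (∫ x, ‖f x‖ ^ ((2 * d + 2) / (d + 5) : ℝ)) ^
          ((d + 5) / (2 * d + 2) : ℝ)) := by
  rcases hd.eq_or_lt with rfl | hd'
  · obtain ⟨C, hC₀, hC⟩ := exists_norm_eulerKernel_le hfin.ge
    refine ⟨C, hC₀, fun hf _ => (eLpNorm_top_convolution_le hf hC).trans_eq ?_⟩
    norm_num
  · obtain ⟨C, hC₀, hC⟩ := exists_eLpNorm_convolution_eulerKernel_le_of_holderConjugate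
      (by rwa [hfin]) (by rw [hfin]) (holderConjugate_endpoint (by exact_mod_cast hd'))
    refine ⟨C, hC₀, fun hf hfp => ?_⟩
    have hle := hC hf hfp
    rw [lpNorm_ofReal_eq hf.1 (by positivity), one_div_div] at hle
    rwa [if_neg hd'.ne']

end Convolution

/-- Stein–Tomas type convolution bound for the kernel
`K̃(x) = x·∇K(x)`, where `K = σ̂` is the Fourier transform of the surface measure of the
unit sphere: convolution with `K̃` maps `L^{(2n+2)/(n+5)}` to `L^{(2n+2)/(n-3)}`
(with target `L^∞` when `n = 3`). -/
theorem stein_tomas_derivative_kernel (n : ℕ) (hn : 3 ≤ n) :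
    ∃ C : ℝ, 0 < C ∧ ∀ f : SchwartzMap (EuclideanSpace ℝ (Fin n)) ℂ,
      eLpNorm (fun x : EuclideanSpace ℝ (Fin n) =>
          ∫ y : EuclideanSpace ℝ (Fin n), f y *
            (fderiv ℝ (fun z : EuclideanSpace ℝ (Fin n) =>
                ∫ ω : sphere (0 : EuclideanSpace ℝ (Fin n)) 1,
                  Complex.exp (2 * (π : ℂ) * I *
                    ((⟪z, (ω : EuclideanSpace ℝ (Fin n))⟫ : ℝ) : ℂ))
                  ∂((volume : Measure (EuclideanSpace ℝ (Fin n))).toSphere))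
              (x - y) (x - y)))
        (if n = 3 then (⊤ : ℝ≥0∞) else ENNReal.ofReal ((2 * (n : ℝ) + 2) / ((n : ℝ) - 3)))
        volume
      ≤ ENNReal.ofReal (C *
          (∫ x : EuclideanSpace ℝ (Fin n), ‖f x‖ ^ ((2 * (n : ℝ) + 2) / ((n : ℝ) + 5)))
            ^ (((n : ℝ) + 5) / (2 * (n : ℝ) + 2))) := by
  obtain ⟨C, hC₀, hC⟩ := exists_eLpNorm_convolution_eulerKernel_le
    (E := EuclideanSpace ℝ (Fin n)) finrank_euclideanSpace_fin hn
  have hkernel (z v : EuclideanSpace ℝ (Fin n)) := fderiv_sphereExtension_one_apply z v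
  simp only [sphereExtension_one_eq] at hkernel
  refine ⟨C + 1, by positivity, fun f => ?_⟩
  simp only [hkernel]
  refine (hC f.integrable (f.memLp _)).trans (ENNReal.ofReal_le_ofReal ?_)
  gcongr
  exact le_add_of_nonneg_right zero_le_one
end
end

section
/- Let n ≥ 1 and let g : ℝ × ℝⁿ → ℂ be continuous with compact support. For λ ∈ [0,1] define P_λ g(t,x) = Σ_{m ∈ ℤ} e^{−2πiλm} g(t + 2πm, x) (a finite sum for each (t,x)). Then the Plancherel identity ∫_0^1 ∫_0^{2π} ∫_{ℝⁿ} |P_λ g(t,x)|² dx dt dλ = ∫_{ℝ} ∫_{ℝⁿ} |g(t,x)|² dx dt holds. -/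
open MeasureTheory Complex
open scoped Real

noncomputable section

/-! For fixed `(t, x)`, `P_λ g(t, x)` is the Fourier series in `λ` whose coefficients are the
samples `g(t + Tm, x)`, so Parseval's identity turns the integral in `λ` into
`∑ₘ ‖g(t + Tm, x)‖²`. Integrating over `(t, x) ∈ (0, T] × X` then tiles the whole line by translates
of one period. The same tiling applied to `‖g‖` shows that an integrable `g` has absolutely summable
samples for almost every `(t, x)`; the integrals in `λ` and `(t, x)` are exchanged by Tonelli. -/

open Set
open scoped ComplexConjugate ENNReal

/-- The `m`-th character `λ ↦ e^{-2πiλm}` of `ℝ / ℤ`, with the sign convention of `P_λ`. -/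
def fourierMode (m : ℤ) (lam : ℝ) : ℂ :=
  Complex.exp (-(2 * (π : ℂ) * I * (lam : ℂ) * (m : ℂ)))

/-- The sum at `lam` of the Fourier series with vector coefficients `a`; it is meaningful for
summable `a`, and `tsum` makes it `0` where the series is not summable. -/
def fourierSeries {E : Type*} [NormedAddCommGroup E] [NormedSpace ℂ E] (a : ℤ → E) (lam : ℝ) : E :=
  ∑' m : ℤ, fourierMode m lam • a m

/-- The Zak (Floquet–Bloch) transform of `g` in the time variable with period `T`, which is
`P_λ g(t, x)` for `T = 2π` and `p = (t, x)`. -/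
def zakTransform {X E : Type*} [NormedAddCommGroup E] [NormedSpace ℂ E] (T : ℝ) (g : ℝ × X → E)
    (lam : ℝ) (p : ℝ × X) : E :=
  fourierSeries (fun m : ℤ => g (p.1 + T * m, p.2)) lam

/-- The product of Lebesgue measure and `μ` on the strip `(0, T] × X` over one time period. -/
abbrev stripMeasure {X : Type*} [MeasurableSpace X] (T : ℝ) (μ : Measure X) : Measure (ℝ × X) :=
  (volume.restrict (Ioc 0 T)).prod μ

section FourierMode

lemma continuous_fourierMode (m : ℤ) : Continuous (fourierMode m) := by
  unfold fourierMode
  fun_prop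

lemma norm_fourierMode (m : ℤ) (lam : ℝ) : ‖fourierMode m lam‖ = 1 := by
  simp [fourierMode, Complex.norm_exp]

lemma conj_fourierMode_mul (m k : ℤ) (lam : ℝ) :
    conj (fourierMode m lam) * fourierMode k lam = fourierMode (k - m) lam := by
  simp only [fourierMode, ← Complex.exp_conj, ← Complex.exp_add, map_neg, map_mul, map_ofNat,
    conj_ofReal, conj_I, map_intCast, Int.cast_sub]
  ring_nf

lemma integral_fourierMode (m : ℤ) :
    ∫ lam in (0 : ℝ)..1, fourierMode m lam = if m = 0 then 1 else 0 := by
  split_ifs with hm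
  · simp [fourierMode, hm]
  · have hc : -(2 * π * I * m) ≠ 0 := by
      simpa only [neg_ne_zero] using mul_ne_zero two_pi_I_ne_zero (Int.cast_ne_zero.mpr hm)
    have hexp : Complex.exp (-(2 * π * I * m)) = 1 :=
      Complex.exp_eq_one_iff.mpr ⟨-m, by push_cast; ring⟩
    calc ∫ lam in (0 : ℝ)..1, fourierMode m lam
        = ∫ lam in (0 : ℝ)..1, Complex.exp (-(2 * π * I * m) * lam) := by
          simp only [fourierMode, neg_mul, mul_right_comm]
      _ = 0 := by
          rw [integral_exp_mul_complex hc, ofReal_one, mul_one, hexp, ofReal_zero, mul_zero,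
            Complex.exp_zero, sub_self, zero_div]

end FourierMode

section FourierSeries

variable {E : Type*} [NormedAddCommGroup E] [NormedSpace ℂ E]

lemma norm_fourierMode_smul (m : ℤ) (lam : ℝ) (v : E) : ‖fourierMode m lam • v‖ = ‖v‖ := by
  rw [norm_smul, norm_fourierMode, one_mul]

variable [CompleteSpace E] {a : ℤ → E}

lemma hasSum_fourierSeries (ha : Summable fun m => ‖a m‖) (lam : ℝ) :
    HasSum (fun m => fourierMode m lam • a m) (fourierSeries a lam) :=
  (Summable.of_norm (by simpa only [norm_fourierMode_smul] using ha)).hasSum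

lemma continuous_fourierSeries (ha : Summable fun m => ‖a m‖) : Continuous (fourierSeries a) :=
  continuous_tsum (fun m => (continuous_fourierMode m).smul continuous_const) ha
    fun m lam => (norm_fourierMode_smul m lam (a m)).le

lemma integral_conj_fourierMode_smul_fourierSeries (ha : Summable fun m => ‖a m‖) (m : ℤ) :
    ∫ lam in (0 : ℝ)..1, conj (fourierMode m lam) • fourierSeries a lam = a m := by
  have hterm : ∀ k, ∫ lam in (0 : ℝ)..1, conj (fourierMode m lam) • fourierMode k lam • a k =
      if k = m then a m else 0 := fun k => by
    simp_rw [smul_smul, conj_fourierMode_mul, intervalIntegral.integral_smul_const,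
      integral_fourierMode, sub_eq_zero, ite_smul, one_smul, zero_smul]
    exact ite_congr rfl (congrArg a) fun _ => rfl
  have hswap : HasSum
      (fun k => ∫ lam in (0 : ℝ)..1, conj (fourierMode m lam) • fourierMode k lam • a k)
      (∫ lam in (0 : ℝ)..1, conj (fourierMode m lam) • fourierSeries a lam) := by
    refine intervalIntegral.hasSum_integral_of_dominated_convergence (fun k _ => ‖a k‖)
      (fun k => ?_) (fun k => ?_) (.of_forall fun _ _ => ha) intervalIntegrable_const
      (.of_forall fun lam _ => (hasSum_fourierSeries ha lam).const_smul _)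
    · exact ((Complex.continuous_conj.comp (continuous_fourierMode m)).smul
        ((continuous_fourierMode k).smul continuous_const)).aestronglyMeasurable
    · refine .of_forall fun lam _ => ?_
      rw [norm_smul, RCLike.norm_conj, norm_fourierMode, one_mul, norm_fourierMode_smul]
  simp_rw [hterm] at hswap
  exact hswap.unique (hasSum_ite_eq m (a m))

end FourierSeries

section Parseval

variable {H : Type*} [NormedAddCommGroup H] [InnerProductSpace ℂ H] [CompleteSpace H] {a : ℤ → H}

lemma hasSum_norm_sq_fourierSeries (ha : Summable fun m => ‖a m‖) :
    HasSum (fun m => ‖a m‖ ^ 2) (∫ lam in (0 : ℝ)..1, ‖fourierSeries a lam‖ ^ 2) := by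
  have hcont := continuous_fourierSeries ha
  have inner_self : ∀ v : H, inner ℂ v v = ((‖v‖ ^ 2 : ℝ) : ℂ) := fun v => by
    rw [inner_self_eq_norm_sq_to_K]
    norm_cast
  have hterm : ∀ m, ∫ lam in (0 : ℝ)..1,
      inner ℂ (fourierMode m lam • a m) (fourierSeries a lam) = ((‖a m‖ ^ 2 : ℝ) : ℂ) := fun m => by
    have hint : IntervalIntegrable (fun lam => conj (fourierMode m lam) • fourierSeries a lam)
        volume 0 1 :=
      ((Complex.continuous_conj.comp (continuous_fourierMode m)).smul hcont).intervalIntegrable _ _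
    simp_rw [inner_smul_left, ← inner_smul_right, ← innerSL_apply_apply ℂ (a m)]
    rw [(innerSL ℂ (a m)).intervalIntegral_comp_comm hint,
      integral_conj_fourierMode_smul_fourierSeries ha, innerSL_apply_apply, inner_self]
  have hswap : HasSum (fun m => ∫ lam in (0 : ℝ)..1,
      inner ℂ (fourierMode m lam • a m) (fourierSeries a lam))
      (∫ lam in (0 : ℝ)..1, inner ℂ (fourierSeries a lam) (fourierSeries a lam)) := by
    refine intervalIntegral.hasSum_integral_of_dominated_convergence
      (fun m lam => ‖a m‖ * ‖fourierSeries a lam‖)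
      (fun m => ?_) (fun m => ?_) (.of_forall fun lam _ => ha.mul_right _) ?_
      (.of_forall fun lam _ => ?_)
    · exact (((continuous_fourierMode m).smul continuous_const).inner hcont).aestronglyMeasurable
    · refine .of_forall fun lam _ => (norm_inner_le_norm _ _).trans_eq ?_
      rw [norm_fourierMode_smul]
    · simp_rw [tsum_mul_right]
      exact (hcont.norm.const_mul _).intervalIntegrable _ _
    · exact (hasSum_fourierSeries ha lam).mapL (innerSLFlip ℂ (fourierSeries a lam))
  simp_rw [hterm, inner_self] at hswap
  rwa [← Complex.hasSum_ofReal, ← intervalIntegral.integral_ofReal]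

lemma lintegral_enorm_sq_fourierSeries (ha : Summable fun m => ‖a m‖) :
    ∫⁻ lam in Ioc (0 : ℝ) 1, ‖fourierSeries a lam‖ₑ ^ 2 = ∑' m, ‖a m‖ₑ ^ 2 := by
  have hsum := hasSum_norm_sq_fourierSeries ha
  have hint : IntegrableOn (fun lam => ‖fourierSeries a lam‖ ^ 2) (Ioc 0 1) :=
    (((continuous_fourierSeries ha).norm.pow 2).intervalIntegrable 0 1).1
  calc ∫⁻ lam in Ioc (0 : ℝ) 1, ‖fourierSeries a lam‖ₑ ^ 2
      = ENNReal.ofReal (∫ lam in (0 : ℝ)..1, ‖fourierSeries a lam‖ ^ 2) := by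
        rw [intervalIntegral.integral_of_le zero_le_one,
          ofReal_integral_eq_lintegral_ofReal hint (.of_forall fun _ => sq_nonneg _)]
        simp_rw [ENNReal.ofReal_pow (norm_nonneg _), ofReal_norm]
    _ = ∑' m, ‖a m‖ₑ ^ 2 := by
        rw [← hsum.tsum_eq, ENNReal.ofReal_tsum_of_nonneg (fun _ => sq_nonneg _) hsum.summable]
        simp_rw [ENNReal.ofReal_pow (norm_nonneg _), ofReal_norm]

end Parseval

section Tiling

lemma lintegral_eq_tsum_setLIntegral_Ioc_translates {T : ℝ} (hT : 0 < T) (F : ℝ → ℝ≥0∞) :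
    ∫⁻ t, F t = ∑' m : ℤ, ∫⁻ t in Ioc 0 T, F (t + T * m) := by
  rw [← setLIntegral_univ, ← iUnion_Ioc_zsmul hT,
    lintegral_iUnion (fun _ => measurableSet_Ioc) (pairwise_disjoint_Ioc_zsmul T)]
  refine tsum_congr fun m => ?_
  have hpreimage : (· + T * (m : ℝ)) ⁻¹' Ioc (m • T) ((m + 1) • T) = Ioc 0 T := by
    rw [preimage_add_const_Ioc]
    congr 1 <;> push_cast [zsmul_eq_mul] <;> ring
  rw [← (measurePreserving_add_right volume (T * m)).setLIntegral_comp_preimage_emb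
    (measurableEmbedding_addRight _), hpreimage]

variable {X : Type*} [MeasurableSpace X] {μ : Measure X} [SFinite μ]

lemma quasiMeasurePreserving_add_fst_strip (T c : ℝ) :
    Measure.QuasiMeasurePreserving (fun p : ℝ × X => (p.1 + c, p.2))
      (stripMeasure T μ) (volume.prod μ) :=
  ((measurePreserving_add_right volume c).prod (.id μ)).quasiMeasurePreserving.mono_left
    (Measure.restrict_le_self.absolutelyContinuous.prod .rfl)

lemma lintegral_prod_eq_lintegral_strip_tsum_translates {T : ℝ} (hT : 0 < T) {F : ℝ × X → ℝ≥0∞}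
    (hF : AEMeasurable F (volume.prod μ)) :
    ∫⁻ p, F p ∂(volume.prod μ) = ∫⁻ p, ∑' m : ℤ, F (p.1 + T * m, p.2) ∂stripMeasure T μ := by
  have hshift : ∀ m : ℤ,
      AEMeasurable (fun p : ℝ × X => F (p.1 + T * m, p.2)) (stripMeasure T μ) := fun m =>
    hF.comp_quasiMeasurePreserving (quasiMeasurePreserving_add_fst_strip _ _)
  calc ∫⁻ p, F p ∂(volume.prod μ)
      = ∫⁻ x, (∑' m : ℤ, ∫⁻ t in Ioc 0 T, F (t + T * m, x)) ∂μ := by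
        rw [lintegral_prod_symm _ hF]
        exact lintegral_congr fun x =>
          lintegral_eq_tsum_setLIntegral_Ioc_translates hT fun t => F (t, x)
    _ = ∑' m : ℤ, ∫⁻ x, (∫⁻ t in Ioc 0 T, F (t + T * m, x)) ∂μ :=
        lintegral_tsum fun m => (hshift m).lintegral_prod_left'
    _ = ∑' m : ℤ, ∫⁻ p, F (p.1 + T * m, p.2) ∂stripMeasure T μ :=
        tsum_congr fun m => (lintegral_prod_symm _ (hshift m)).symm
    _ = ∫⁻ p, ∑' m : ℤ, F (p.1 + T * m, p.2) ∂stripMeasure T μ :=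
        (lintegral_tsum hshift).symm

end Tiling

section Zak

variable {X E : Type*} [MeasurableSpace X] {μ : Measure X} [SFinite μ]
  [NormedAddCommGroup E] {T : ℝ} {g : ℝ × X → E}

lemma ae_summable_norm_translates (hT : 0 < T) (hg : Integrable g (volume.prod μ)) :
    ∀ᵐ p ∂stripMeasure T μ, Summable fun m : ℤ => ‖g (p.1 + T * m, p.2)‖ := by
  have hmeas : AEMeasurable (fun p : ℝ × X => ∑' m : ℤ, ‖g (p.1 + T * m, p.2)‖ₑ)
      (stripMeasure T μ) := .tsum fun m =>
    hg.1.enorm.comp_quasiMeasurePreserving (quasiMeasurePreserving_add_fst_strip _ _)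
  have hfin : ∫⁻ p, ∑' m : ℤ, ‖g (p.1 + T * m, p.2)‖ₑ ∂stripMeasure T μ ≠ ∞ :=
    lintegral_prod_eq_lintegral_strip_tsum_translates hT hg.1.enorm ▸ hg.2.ne
  filter_upwards [ae_lt_top' hmeas hfin] with p hp
  simpa only [toReal_enorm] using ENNReal.summable_toReal hp.ne

variable [NormedSpace ℂ E] [CompleteSpace E]

lemma aestronglyMeasurable_zakTransform (hT : 0 < T) (hg : Integrable g (volume.prod μ))
    (ν : Measure ℝ) [SFinite ν] :
    AEStronglyMeasurable (fun q : ℝ × ℝ × X => zakTransform T g q.1 q.2)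
      (ν.prod (stripMeasure T μ)) := by
  refine aestronglyMeasurable_of_tendsto_ae Filter.atTop
    (f := fun S q => ∑ m ∈ S, fourierMode m q.1 • g (q.2.1 + T * m, q.2.2)) (fun S => ?_) ?_
  · refine Finset.aestronglyMeasurable_fun_sum _ fun m _ => ?_
    refine .smul ((continuous_fourierMode m).aestronglyMeasurable.comp_fst) ?_
    exact (hg.1.comp_quasiMeasurePreserving
      (quasiMeasurePreserving_add_fst_strip T (T * m))).comp_snd
  · filter_upwards [Measure.quasiMeasurePreserving_snd.ae (ae_summable_norm_translates hT hg)]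
      with q hq using hasSum_fourierSeries hq q.1

end Zak

section Plancherel

lemma integral_norm_sq_eq_toReal_lintegral {α E : Type*} [MeasurableSpace α] [NormedAddCommGroup E]
    {ν : Measure α} {f : α → E} (hf : AEStronglyMeasurable f ν) :
    ∫ x, ‖f x‖ ^ 2 ∂ν = (∫⁻ x, ‖f x‖ₑ ^ 2 ∂ν).toReal := by
  simpa only [Pi.pow_apply, norm_pow, norm_norm, enorm_pow, enorm_norm]
    using integral_norm_eq_lintegral_enorm (hf.norm.pow 2)

variable {X H : Type*} [MeasurableSpace X] {μ : Measure X} [SFinite μ]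
  [NormedAddCommGroup H] [InnerProductSpace ℂ H] [CompleteSpace H] {T : ℝ} {g : ℝ × X → H}

theorem lintegral_enorm_sq_zakTransform (hT : 0 < T) (hg : Integrable g (volume.prod μ)) :
    ∫⁻ q : ℝ × ℝ × X, ‖zakTransform T g q.1 q.2‖ₑ ^ 2
        ∂((volume.restrict (Ioc 0 1)).prod (stripMeasure T μ)) =
      ∫⁻ p, ‖g p‖ₑ ^ 2 ∂(volume.prod μ) := by
  have hmeas :=
    (aestronglyMeasurable_zakTransform hT hg (volume.restrict (Ioc 0 1))).enorm.pow_const 2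
  rw [lintegral_prod_symm _ hmeas,
    lintegral_prod_eq_lintegral_strip_tsum_translates hT (hg.1.enorm.pow_const 2)]
  refine lintegral_congr_ae ?_
  filter_upwards [ae_summable_norm_translates hT hg] with p hp
    using lintegral_enorm_sq_fourierSeries hp

lemma integrable_norm_sq_zakTransform (hT : 0 < T) (hg : Integrable g (volume.prod μ))
    (hg2 : MemLp g 2 (volume.prod μ)) :
    Integrable (fun q : ℝ × ℝ × X => ‖zakTransform T g q.1 q.2‖ ^ 2)
      ((volume.restrict (Ioc 0 1)).prod (stripMeasure T μ)) := by
  refine ⟨(aestronglyMeasurable_zakTransform hT hg _).norm.pow 2, ?_⟩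
  have hfin := (hg2.integrable_norm_pow two_ne_zero).hasFiniteIntegral
  simp only [HasFiniteIntegral, enorm_pow, enorm_norm] at hfin ⊢
  rwa [lintegral_enorm_sq_zakTransform hT hg]

theorem P_lambda_plancherel_general (hT : 0 < T) (hg : Integrable g (volume.prod μ))
    (hg2 : MemLp g 2 (volume.prod μ)) :
    (∫ lam in (0 : ℝ)..1, ∫ t in (0 : ℝ)..T, ∫ x, ‖zakTransform T g lam (t, x)‖ ^ 2 ∂μ) =
      ∫ t : ℝ, ∫ x, ‖g (t, x)‖ ^ 2 ∂μ := by
  have hint := integrable_norm_sq_zakTransform hT hg hg2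
  simp_rw [intervalIntegral.integral_of_le zero_le_one, intervalIntegral.integral_of_le hT.le]
  calc ∫ lam in Ioc 0 1, ∫ t in Ioc 0 T, ∫ x, ‖zakTransform T g lam (t, x)‖ ^ 2 ∂μ
      = ∫ lam in Ioc 0 1, ∫ p, ‖zakTransform T g lam p‖ ^ 2 ∂stripMeasure T μ := by
        refine integral_congr_ae ?_
        filter_upwards [hint.prod_right_ae] with lam hlam using (integral_prod _ hlam).symm
    _ = ∫ q : ℝ × ℝ × X, ‖zakTransform T g q.1 q.2‖ ^ 2
          ∂((volume.restrict (Ioc 0 1)).prod (stripMeasure T μ)) :=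
        (integral_prod _ hint).symm
    _ = ∫ p, ‖g p‖ ^ 2 ∂(volume.prod μ) := by
        rw [integral_norm_sq_eq_toReal_lintegral (aestronglyMeasurable_zakTransform hT hg _),
          lintegral_enorm_sq_zakTransform hT hg, integral_norm_sq_eq_toReal_lintegral hg.1]
    _ = ∫ t : ℝ, ∫ x, ‖g (t, x)‖ ^ 2 ∂μ :=
        integral_prod _ (hg2.integrable_norm_pow two_ne_zero)

end Plancherel

/-- Plancherel identity for the partial Fourier transform
`P_λ g(t,x) = Σ_{m∈ℤ} e^{-2πiλm} g(t+2πm, x)` in the time variable: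
`∫_0^1 ‖P_λ g‖²_{L²([0,2π]×ℝⁿ)} dλ = ‖g‖²_{L²(ℝ×ℝⁿ)}`. -/
theorem P_lambda_plancherel (n : ℕ) (hn : 1 ≤ n)
    (g : ℝ × EuclideanSpace ℝ (Fin n) → ℂ)
    (hg : Continuous g) (hsupp : HasCompactSupport g) :
    (∫ lam in (0:ℝ)..1, ∫ t in (0:ℝ)..(2*π), ∫ x : EuclideanSpace ℝ (Fin n),
        ‖∑' m : ℤ, Complex.exp (-(2 * (π : ℂ) * I * (lam : ℂ) * (m : ℂ))) *
            g (t + 2 * π * (m : ℝ), x)‖ ^ 2)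
      = ∫ t : ℝ, ∫ x : EuclideanSpace ℝ (Fin n), ‖g (t, x)‖ ^ 2 :=
  P_lambda_plancherel_general Real.two_pi_pos (hg.integrable_of_hasCompactSupport hsupp)
    (hg.memLp_of_hasCompactSupport hsupp)
end
end
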